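/- arXiv:2307.15512 — 4 statements merged into one kernel-verified Lean document; each statement's English description precedes it below -/
import Mathlib

section
/- Let k = k(n) ≥ 2 and p = p(n) > 0 be sequences such that d̂/k = ω(log³ n), k = ω(log n), and d̂ ≤ n, where d̂ = p·k·C(n−1,k−1). Then with high probability (probability tending to 1 as n → ∞) the random hypergraph G = G^k(n,p) satisfies: for every subset A ⊆ V(G) and every ε = ε(n) ∈ (0, 1/2] such that (|A|·d̂/n)^ε ≤ 2^{-6}, (1 − ε)·(1 − δ)·|A|·d̂ ≤ |N_V^1(A)| ≤ (1 + δ)·|A|·d̂, where δ = √(log log n)/log n. -/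
open scoped BigOperators

/-- A `k`-uniform hypergraph on vertex set `Fin n`. -/
structure KGraph (n k : ℕ) where
  edges : Finset (Finset (Fin n))
  uniform : ∀ e ∈ edges, e.card = k

namespace KGraph

variable {n k : ℕ}

/-- A loose path of edges from `x` to `y`: a nonempty list of edges, the first containing `x`,
the last containing `y`, with consecutive edges intersecting. -/
def IsLoosePath (G : KGraph n k) (x y : Fin n) (l : List (Finset (Fin n))) : Prop :=
  l ≠ [] ∧ (∀ e ∈ l, e ∈ G.edges) ∧ (∀ e ∈ l.head?, x ∈ e) ∧
    (∀ e ∈ l.getLast?, y ∈ e) ∧ l.Chain' (fun e f => (e ∩ f).Nonempty)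

/-- Distance between two vertices: the smallest length of a loose path between them
(`0` if they are equal, `⊤` if there is no such path). -/
noncomputable def dist (G : KGraph n k) (x y : Fin n) : ℕ∞ :=
  if x = y then 0
  else sInf ((fun l : List (Finset (Fin n)) => (l.length : ℕ∞)) '' {l | G.IsLoosePath x y l})

/-- Distance between two sets of vertices: the minimum over pairs. -/
noncomputable def setDist (G : KGraph n k) (A B : Set (Fin n)) : ℕ∞ :=
  ⨅ (x ∈ A) (y ∈ B), G.dist x y

/-- The closed `r`-th vertex-neighbourhood of a set of vertices. -/
noncomputable def vNhd (G : KGraph n k) (A : Set (Fin n)) (r : ℕ) : Set (Fin n) :=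
  {v | G.setDist A {v} ≤ (r : ℕ∞)}

/-- The set of vertices covered by a set of edges. -/
def VB (B : Set (Finset (Fin n))) : Set (Fin n) :=
  ⋃ e ∈ B, (e : Set (Fin n))

/-- The closed `r`-th vertex-neighbourhood of a set of edges. -/
noncomputable def vNhdE (G : KGraph n k) (B : Set (Finset (Fin n))) (r : ℕ) : Set (Fin n) :=
  G.vNhd (VB B) r

/-- The closed `r`-th edge-neighbourhood of a set of vertices: edges within distance `r - 1`. -/
noncomputable def eNhd (G : KGraph n k) (A : Set (Fin n)) (r : ℕ) : Set (Finset (Fin n)) :=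
  {e | e ∈ G.edges ∧ G.setDist (e : Set (Fin n)) A ≤ ((r - 1 : ℕ) : ℕ∞)}

/-- The average vertex degree of `G`. -/
noncomputable def avgDeg (G : KGraph n k) : ℝ :=
  (∑ v : Fin n, ((G.vNhd {v} 1).ncard : ℝ)) / n

/-- A `k`-graph on `n` vertices with average vertex degree `d ≥ k` is `ξ`-expanding if
(A.1) edge-neighbourhoods of vertices are not too large, (A.2) vertex-neighbourhoods of vertex
sets have size comparable to `|A| d^r`, and (A.3) vertex-neighbourhoods of edge sets are large. -/
def IsExpanding (G : KGraph n k) (ξ : ℝ) : Prop :=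
  (k : ℝ) ≤ G.avgDeg ∧
  (∀ v : Fin n, ∀ r : ℕ, 1 ≤ r → G.avgDeg ^ r ≤ Real.sqrt ((n : ℝ) * k) →
    ((G.eNhd {v} r).ncard : ℝ) ≤ ξ⁻¹ * G.avgDeg ^ r / k) ∧
  (∀ A : Set (Fin n), ∀ r : ℕ, 1 ≤ r →
    ξ * min ((A.ncard : ℝ) * G.avgDeg ^ r) (n : ℝ) ≤ ((G.vNhd A r).ncard : ℝ) ∧
    ((G.vNhd A r).ncard : ℝ) ≤ ξ⁻¹ * (A.ncard : ℝ) * G.avgDeg ^ r) ∧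
  (∀ B : Set (Finset (Fin n)), B ⊆ (G.edges : Set (Finset (Fin n))) → ∀ r : ℕ, 1 ≤ r →
    ξ * min ((B.ncard : ℝ) * k * G.avgDeg ^ r) (n : ℝ) ≤ ((G.vNhdE B r).ncard : ℝ))

/-- `CopsWin G c r` : with the cops currently on the vertices `c i`, the robber on `r`, and the
cops to move, the cops have a strategy to catch the robber. Either a cop is already on the
robber's vertex; or the cops can move (each by distance at most 1) so that a cop lands on the
robber; or the cops can move so that whatever the robber's reply, the cops still win. -/
inductive CopsWin (G : KGraph n k) {m : ℕ} : (Fin m → Fin n) → Fin n → Prop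
  | caught (c : Fin m → Fin n) (r : Fin n) (i : Fin m) (h : c i = r) : CopsWin G c r
  | stepCaught (c c' : Fin m → Fin n) (r : Fin n)
      (hmove : ∀ i, G.dist (c i) (c' i) ≤ 1) (i : Fin m) (h : c' i = r) : CopsWin G c r
  | step (c c' : Fin m → Fin n) (r : Fin n)
      (hmove : ∀ i, G.dist (c i) (c' i) ≤ 1)
      (h : ∀ r' : Fin n, G.dist r r' ≤ 1 → CopsWin G c' r') : CopsWin G c r

/-- The cop number of `G` : the least `m` such that `m` cops can be initially placed so as to
catch the robber wherever he starts. -/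
noncomputable def copNumber (G : KGraph n k) : ℕ :=
  sInf {m : ℕ | ∃ c₀ : Fin m → Fin n, ∀ r₀ : Fin n, CopsWin G c₀ r₀}

/-- `G` is connected if all pairs of vertices are at finite distance. -/
def Connected (G : KGraph n k) : Prop := ∀ x y : Fin n, G.dist x y ≠ ⊤

end KGraph

open Classical in
/-- The probability that the binomial random `k`-uniform hypergraph `G^k(n,p)` (each `k`-subset
of `[n]` an edge independently with probability `p`) satisfies the property `Q`. -/
noncomputable def ghProb (n k : ℕ) (p : ℝ) (Q : KGraph n k → Prop) : ℝ :=
  ∑ E ∈ (Finset.powersetCard k (Finset.univ : Finset (Fin n))).powerset,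
    if h : ∀ e ∈ E, e.card = k then
      (if Q ⟨E, h⟩ then
        p ^ E.card * (1 - p) ^ ((Finset.powersetCard k (Finset.univ : Finset (Fin n))).card - E.card)
      else 0)
    else 0

lemma nat_le_choose : ∀ m j : ℕ, 1 ≤ j → j + 1 ≤ m → m ≤ m.choose j := by
  intro m
  induction m with
  | zero => intro j h1 h2; omega
  | succ m ih =>
    intro j h1 h2
    obtain ⟨j, rfl⟩ : ∃ i, j = i + 1 := ⟨j - 1, by omega⟩
    rw [Nat.choose_succ_succ]
    rcases Nat.eq_zero_or_pos j with rfl | hj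
    · simp
    · have := ih j hj (by omega)
      have h3 : 0 < m.choose j.succ := Nat.choose_pos (by omega)
      omega

lemma choose_ratio (t n j : ℕ) (h : t ≤ n) : t.choose j * n ^ j ≤ n.choose j * t ^ j := by
  have key : ∀ j, t.descFactorial j * n ^ j ≤ n.descFactorial j * t ^ j := by
    intro j
    induction j with
    | zero => simp
    | succ j ih =>
      rw [Nat.descFactorial_succ, Nat.descFactorial_succ, pow_succ, pow_succ]
      have h1 : (t - j) * n ≤ (n - j) * t := by
        rcases le_total t j with h2 | h2
        · simp [Nat.sub_eq_zero_of_le h2]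
        · have h3 : j ≤ n := h2.trans h
          zify [h2, h3]
          have : (t:ℤ) ≤ n := by exact_mod_cast h
          nlinarith
      calc (t - j) * t.descFactorial j * (n ^ j * n) = ((t - j) * n) * (t.descFactorial j * n ^ j) := by ring
        _ ≤ ((n - j) * t) * (n.descFactorial j * t ^ j) := Nat.mul_le_mul h1 ih
        _ = _ := by ring
  have := key j
  rw [Nat.descFactorial_eq_factorial_mul_choose, Nat.descFactorial_eq_factorial_mul_choose, mul_assoc, mul_assoc] at this
  exact Nat.le_of_mul_le_mul_left this (Nat.factorial_pos j)

/-- union bound: `j+1`-subsets meeting a `b`-set -/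
lemma choose_drop (m b j : ℕ) : (m + b).choose (j+1) ≤ m.choose (j+1) + b * (m + b - 1).choose j := by
  induction b with
  | zero => simp
  | succ b ih =>
    have h1 : (m + (b+1)).choose (j+1) = (m+b).choose j + (m+b).choose (j+1) := by
      rw [← add_assoc, Nat.choose_succ_succ]
    have h2 : (m + b - 1).choose j ≤ (m+b).choose j := Nat.choose_le_choose _ (by omega)
    have h3 : m + (b+1) - 1 = m + b := by omega
    rw [h1, h3]
    nlinarith [Nat.mul_le_mul_left b h2]

lemma choose_touch (m a j : ℕ) : m.choose (j+1) + a * m.choose j ≤ (m + a).choose (j+1) := by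
  induction a with
  | zero => simp
  | succ a ih =>
    have h1 : (m + (a+1)).choose (j+1) = (m+a).choose j + (m+a).choose (j+1) := by
      rw [← add_assoc, Nat.choose_succ_succ]
    have h2 : m.choose j ≤ (m+a).choose j := Nat.choose_le_choose _ (by omega)
    rw [h1]
    nlinarith

noncomputable def wtE {α : Type*} (p : ℝ) (U E : Finset α) : ℝ :=
  p ^ E.card * (1 - p) ^ (U.card - E.card)

open Classical in
noncomputable def prE {α : Type*} (p : ℝ) (U : Finset α) (Q : Finset α → Prop) : ℝ :=
  ∑ E ∈ U.powerset, if Q E then wtE p U E else 0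

lemma wtE_nonneg {α : Type*} {p : ℝ} (h0 : 0 ≤ p) (h1 : p ≤ 1) (U E : Finset α) : 0 ≤ wtE p U E := by
  unfold wtE
  have : 0 ≤ 1 - p := by linarith
  positivity

lemma sum_wtE {α : Type*} (p : ℝ) (U : Finset α) : ∑ E ∈ U.powerset, wtE p U E = 1 := by
  unfold wtE
  rw [Finset.sum_pow_mul_eq_add_pow]; simp

lemma prE_le_sum {α ι : Type*} {p : ℝ} (h0 : 0 ≤ p) (h1 : p ≤ 1) (U : Finset α) (Q : Finset α → Prop)
    (s : Finset ι) (R : ι → Finset α → Prop) (h : ∀ E ∈ U.powerset, Q E → ∃ i ∈ s, R i E) :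
    prE p U Q ≤ ∑ i ∈ s, prE p U (R i) := by
  classical
  unfold prE
  rw [Finset.sum_comm]
  refine Finset.sum_le_sum fun E hE => ?_
  have hw := wtE_nonneg h0 h1 U E
  have hnn : ∀ i ∈ s, 0 ≤ (if R i E then wtE p U E else 0) := by
    intro i _; split_ifs <;> simp [hw]
  split_ifs with hQ
  · obtain ⟨i, hi, hR⟩ := h E hE hQ
    have := Finset.single_le_sum hnn hi
    simpa [hR] using this
  · exact Finset.sum_nonneg hnn

lemma prE_mgf {α : Type*} [DecidableEq α] (p τ : ℝ) (U F : Finset α) (hF : F ⊆ U) :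
    ∑ E ∈ U.powerset, wtE p U E * Real.exp (τ * (E ∩ F).card) = (1 - p + p * Real.exp τ) ^ F.card := by
  have h := Finset.prod_add (fun e => p * (if e ∈ F then Real.exp τ else 1)) (fun _ => 1 - p) U
  have h2 : ∏ e ∈ U, (p * (if e ∈ F then Real.exp τ else 1) + (1 - p)) = (1 - p + p * Real.exp τ) ^ F.card := by
    have : ∀ e ∈ U, (p * (if e ∈ F then Real.exp τ else 1) + (1 - p)) = if e ∈ F then (1 - p + p * Real.exp τ) else 1 := by
      intro e _; split_ifs <;> ring
    rw [Finset.prod_congr rfl this, Finset.prod_ite_mem, Finset.prod_const, Finset.inter_eq_right.2 hF]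
  rw [← h2, h]
  refine Finset.sum_congr rfl fun E hE => ?_
  rw [Finset.mem_powerset] at hE
  rw [Finset.prod_mul_distrib, Finset.prod_ite_mem, Finset.prod_const, Finset.prod_const, Finset.prod_const,
    Finset.card_sdiff_of_subset hE, wtE, mul_comm τ, Real.exp_nat_mul]
  ring

lemma prE_markov {α : Type*} [DecidableEq α] {p : ℝ} (h0 : 0 ≤ p) (h1 : p ≤ 1) (τ c : ℝ) (U F : Finset α) (hF : F ⊆ U)
    (Q : Finset α → Prop) (hQ : ∀ E, Q E → c ≤ τ * (E ∩ F).card) :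
    prE p U Q ≤ Real.exp (F.card * p * (Real.exp τ - 1) - c) := by
  classical
  have hA : prE p U Q ≤ Real.exp (-c) * ∑ E ∈ U.powerset, wtE p U E * Real.exp (τ * (E ∩ F).card) := by
    unfold prE
    rw [Finset.mul_sum]
    refine Finset.sum_le_sum fun E _ => ?_
    have hw := wtE_nonneg h0 h1 U E
    split_ifs with h
    · have h3 : 1 ≤ Real.exp (-c) * Real.exp (τ * (E ∩ F).card) := by
        rw [← Real.exp_add]; apply Real.one_le_exp; linarith [hQ E h]
      nlinarith
    · positivity
  rw [prE_mgf p τ U F hF] at hA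
  refine hA.trans ?_
  have hB : 1 - p + p * Real.exp τ ≤ Real.exp (p * (Real.exp τ - 1)) := by
    have := Real.add_one_le_exp (p * (Real.exp τ - 1)); linarith
  have hC : 0 ≤ 1 - p + p * Real.exp τ := by have := Real.exp_pos τ; nlinarith
  calc _ ≤ Real.exp (-c) * Real.exp (p * (Real.exp τ - 1)) ^ F.card := by gcongr
    _ = _ := by rw [← Real.exp_nat_mul, ← Real.exp_add]; congr 1; ring
lemma mem_vNhd_one {n k : ℕ} (G : KGraph n k) (A : Finset (Fin n)) (v : Fin n) :
    v ∈ G.vNhd (↑A) 1 ↔ v ∈ A ∨ ∃ e ∈ G.edges, v ∈ e ∧ ∃ x ∈ A, x ∈ e := by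
  unfold KGraph.vNhd KGraph.setDist
  simp only [Set.mem_ofPred_eq, Set.mem_singleton_iff, iInf_iInf_eq_left]
  constructor
  · intro h
    have h2 : (⨅ x ∈ (A : Set (Fin n)), G.dist x v) < 2 := lt_of_le_of_lt h (by norm_num)
    simp only [iInf_lt_iff] at h2
    obtain ⟨x, hx, h3⟩ := h2
    unfold KGraph.dist at h3
    split_ifs at h3 with hxv
    · left; rw [← hxv]; exact hx
    · right
      rw [sInf_lt_iff] at h3
      obtain ⟨_, ⟨l, hl, rfl⟩, h4⟩ := h3
      obtain ⟨hne, he, hh, ht, -⟩ := hl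
      have h5 : l.length < 2 := by
        have h6 : (l.length : ℕ∞) < 2 := h4
        exact_mod_cast h6
      match l, hne, he, hh, ht, h5 with
      | [e], _, he, hh, ht, _ =>
        exact ⟨e, he e (by simp), ht e (by simp), x, hx, hh e (by simp)⟩
  · rintro (h | ⟨e, he, hv, x, hx, hxe⟩)
    · refine (iInf₂_le v h).trans ?_
      simp [KGraph.dist]
    · refine (iInf₂_le x hx).trans ?_
      unfold KGraph.dist
      split_ifs with h
      · simp
      · refine sInf_le ⟨[e], ?_, by simp⟩
        refine ⟨by simp, by simpa using he, by simpa using hxe, by simpa using hv, ?_⟩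
        exact List.isChain_singleton e

open Classical in
noncomputable def FE {n : ℕ} (k : ℕ) (A T : Finset (Fin n)) : Finset (Finset (Fin n)) :=
  (Finset.powersetCard k T).filter (fun e => ¬ Disjoint e A)

lemma mem_FE {n k : ℕ} {A T e : Finset (Fin n)} : e ∈ FE k A T ↔ e ⊆ T ∧ e.card = k ∧ ∃ x ∈ A, x ∈ e := by
  simp only [FE, Finset.mem_filter, Finset.mem_powersetCard, Finset.not_disjoint_iff]
  constructor
  · rintro ⟨⟨h1, h2⟩, x, h3, h4⟩; exact ⟨h1, h2, x, h4, h3⟩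
  · rintro ⟨h1, h2, x, h3, h4⟩; exact ⟨⟨h1, h2⟩, x, h4, h3⟩

lemma FE_subset {n k : ℕ} (A T : Finset (Fin n)) : FE k A T ⊆ Finset.powersetCard k Finset.univ :=
  (Finset.filter_subset _ _).trans (Finset.powersetCard_mono (Finset.subset_univ T))

lemma card_FE_le {n k : ℕ} (A T : Finset (Fin n)) :
    (FE k A T).card ≤ A.card * (T.card - 1).choose (k - 1) := by
  classical
  have h1 : FE k A T ⊆ A.biUnion (fun v => (Finset.powersetCard k T).filter (fun e => v ∈ e)) := by
    intro e he
    rw [mem_FE] at he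
    obtain ⟨h1, h2, x, h3, h4⟩ := he
    simp only [Finset.mem_biUnion, Finset.mem_filter, Finset.mem_powersetCard]
    exact ⟨x, h3, ⟨h1, h2⟩, h4⟩
  refine (Finset.card_le_card h1).trans (Finset.card_biUnion_le_card_mul _ _ _ ?_)
  intro v _
  by_cases hv : v ∈ T
  · rw [← Finset.card_erase_of_mem hv, ← Finset.card_powersetCard]
    refine Finset.card_le_card_of_injOn (fun e => e.erase v) ?_ ?_
    · intro e he
      simp only [Finset.coe_filter, Finset.mem_powersetCard, Set.mem_ofPred_eq] at he
      simp only [Finset.mem_coe, Finset.mem_powersetCard]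
      refine ⟨Finset.erase_subset_erase _ he.1.1, ?_⟩
      rw [Finset.card_erase_of_mem he.2, he.1.2]
    · intro e he f hf hef
      simp only [Finset.coe_filter, Finset.mem_powersetCard, Set.mem_ofPred_eq] at he hf
      simp only at hef
      rw [← Finset.insert_erase he.2, ← Finset.insert_erase hf.2, hef]
  · have : (Finset.powersetCard k T).filter (fun e => v ∈ e) = ∅ := by
      apply Finset.filter_eq_empty_iff.2
      intro e he hve
      exact hv ((Finset.mem_powersetCard.1 he).1 hve)
    rw [this]; simp

lemma le_card_FE {n k : ℕ} (hk : 1 ≤ k) (A : Finset (Fin n)) :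
    A.card * (n - A.card).choose (k - 1) ≤ (FE k A Finset.univ).card := by
  classical
  obtain ⟨j, rfl⟩ : ∃ j, k = j + 1 := ⟨k - 1, by omega⟩
  have h1 : FE (j+1) A Finset.univ = Finset.powersetCard (j+1) Finset.univ \ Finset.powersetCard (j+1) Aᶜ := by
    ext e
    simp only [FE, Finset.mem_filter, Finset.mem_sdiff, Finset.mem_powersetCard,
      Finset.subset_compl_iff_disjoint_right]
    tauto
  have h2 : A.card ≤ n := by simpa using Finset.card_le_univ A
  rw [h1, Finset.card_sdiff_of_subset (Finset.powersetCard_mono (Finset.subset_univ _)),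
    Finset.card_powersetCard, Finset.card_powersetCard, Finset.card_compl, Finset.card_univ, Fintype.card_fin]
  have := choose_touch (n - A.card) A.card j
  rw [Nat.sub_add_cancel h2] at this
  simp only [Nat.add_sub_cancel]
  omega

/-- deterministic upper bound -/
lemma vNhd_upper {n k : ℕ} (hk : 1 ≤ k) (G : KGraph n k) (D : ℝ) (hD : 1 ≤ D)
    (hdeg : ∀ v : Fin n, ((G.edges ∩ FE k {v} Finset.univ).card : ℝ) ≤ D) (A : Finset (Fin n)) :
    ((G.vNhd (↑A) 1).ncard : ℝ) ≤ A.card * (k * D) := by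
  classical
  have h1 : G.vNhd (↑A) 1 ⊆ ((A.biUnion fun v => {v} ∪ (G.edges ∩ FE k {v} Finset.univ).biUnion
      fun e => e.erase v : Finset (Fin n)) : Set (Fin n)) := by
    intro w hw
    rw [mem_vNhd_one] at hw
    simp only [Finset.mem_coe, Finset.mem_biUnion, Finset.mem_union, Finset.mem_singleton,
      Finset.mem_inter, mem_FE, Finset.mem_erase]
    rcases hw with h | ⟨e, he, hwe, x, hx, hxe⟩
    · exact ⟨w, h, Or.inl rfl⟩
    · refine ⟨x, hx, ?_⟩
      by_cases hwx : w = x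
      · exact Or.inl hwx
      · exact Or.inr ⟨e, ⟨he, Finset.subset_univ _, G.uniform e he, x, rfl, hxe⟩, hwx, hwe⟩
  have h2 := Set.ncard_le_ncard h1 (Finset.finite_toSet _)
  rw [Set.ncard_coe_finset] at h2
  have h3 : ∀ v ∈ A, ((({v} ∪ (G.edges ∩ FE k {v} Finset.univ).biUnion
      fun e => e.erase v : Finset (Fin n)).card : ℕ) : ℝ) ≤ k * D := by
    intro v _
    have h4 := Finset.card_union_le {v} ((G.edges ∩ FE k {v} Finset.univ).biUnion fun e => e.erase v)
    have h5 : ((G.edges ∩ FE k {v} Finset.univ).biUnion fun e => e.erase v).card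
        ≤ (G.edges ∩ FE k {v} Finset.univ).card * (k - 1) := by
      apply Finset.card_biUnion_le_card_mul
      intro e he
      simp only [Finset.mem_inter, mem_FE, Finset.mem_singleton] at he
      obtain ⟨_, _, h6, x, rfl, h7⟩ := he
      rw [Finset.card_erase_of_mem h7, h6]
    rw [Finset.card_singleton] at h4
    have h6 : ((({v} ∪ (G.edges ∩ FE k {v} Finset.univ).biUnion
      fun e => e.erase v : Finset (Fin n)).card : ℕ) : ℝ) ≤ 1 + ((G.edges ∩ FE k {v} Finset.univ).card : ℝ) * ((k:ℝ) - 1) := by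
      have := h4.trans (Nat.add_le_add_left h5 1)
      have h8 : (((k - 1 : ℕ)) : ℝ) = (k:ℝ) - 1 := by push_cast [hk]; ring
      rw [← h8]
      exact_mod_cast this
    have h9 := hdeg v
    have h10 : (1:ℝ) ≤ k := by exact_mod_cast hk
    nlinarith
  calc ((G.vNhd (↑A) 1).ncard : ℝ) ≤ _ := Nat.cast_le.2 h2
    _ ≤ ((∑ v ∈ A, ({v} ∪ (G.edges ∩ FE k {v} Finset.univ).biUnion
      fun e => e.erase v : Finset (Fin n)).card : ℕ) : ℝ) := Nat.cast_le.2 Finset.card_biUnion_le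
    _ ≤ ∑ v ∈ A, (k * D : ℝ) := by push_cast; exact Finset.sum_le_sum h3
    _ = _ := by simp

lemma ghProb_eq {n k : ℕ} (p : ℝ) (Q : KGraph n k → Prop) :
    ghProb n k p Q = 1 - prE p (Finset.powersetCard k (Finset.univ : Finset (Fin n)))
      (fun E => ∃ h : ∀ e ∈ E, e.card = k, ¬ Q ⟨E, h⟩) := by
  classical
  rw [← sum_wtE p (Finset.powersetCard k (Finset.univ : Finset (Fin n)))]
  unfold prE ghProb
  rw [← Finset.sum_sub_distrib]
  refine Finset.sum_congr rfl fun E hE => ?_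
  have h : ∀ e ∈ E, e.card = k := fun e he =>
    (Finset.mem_powersetCard.1 (Finset.mem_powerset.1 hE he)).2
  rw [dif_pos h]
  by_cases hQ : Q ⟨E, h⟩
  · have : ¬ ∃ h : ∀ e ∈ E, e.card = k, ¬ Q ⟨E, h⟩ := fun ⟨_, h2⟩ => h2 hQ
    rw [if_pos hQ, if_neg this, sub_zero, wtE]
  · rw [if_neg hQ, if_pos ⟨h, hQ⟩, sub_self]

lemma prE_nonneg {α : Type*} {p : ℝ} (h0 : 0 ≤ p) (h1 : p ≤ 1) (U : Finset α) (Q : Finset α → Prop) :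
    0 ≤ prE p U Q := by
  classical
  unfold prE
  refine Finset.sum_nonneg fun E _ => ?_
  split_ifs
  · exact wtE_nonneg h0 h1 U E
  · exact le_rfl
lemma sum_nonempty_le (n : ℕ) (f : ℕ → ℝ) (c : ℝ) (h : ∀ a, 1 ≤ a → a ≤ n → (n.choose a : ℝ) * f a ≤ c) :
    ∑ A ∈ (Finset.univ : Finset (Finset (Fin n))).filter (fun A => A.Nonempty), f A.card ≤ n * c := by
  classical
  have h1 : ∑ A ∈ (Finset.univ : Finset (Finset (Fin n))).filter (fun A => A.Nonempty), f A.card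
      = ∑ A ∈ (Finset.univ : Finset (Fin n)).powerset, (fun a => if a = 0 then 0 else f a) A.card := by
    rw [Finset.sum_filter, Finset.powerset_univ]
    refine Finset.sum_congr rfl fun A _ => ?_
    by_cases hA : A.Nonempty
    · have : A.card ≠ 0 := by simpa [Finset.nonempty_iff_ne_empty] using hA
      simp [hA, this]
    · rw [if_neg hA]
      rw [Finset.not_nonempty_iff_eq_empty] at hA
      simp [hA]
  rw [h1, Finset.sum_powerset_apply_card (fun a => if a = 0 then (0:ℝ) else f a), Finset.card_univ, Fintype.card_fin, Finset.sum_range_succ']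
  simp only [if_true, smul_zero, add_zero]
  calc _ ≤ ∑ i ∈ Finset.range n, c := by
        refine Finset.sum_le_sum fun i hi => ?_
        have := h (i+1) (by omega) (by have := Finset.mem_range.1 hi; omega)
        simpa using this
    _ = n * c := by simp

lemma sumA_le (n : ℕ) (hn : 1 ≤ n) :
    ∑ A ∈ (Finset.univ : Finset (Finset (Fin n))).filter (fun A => A.Nonempty),
      Real.exp (-(3 * (A.card : ℝ) * Real.log n)) ≤ 1 / n := by
  have hn0 : (0:ℝ) < n := by exact_mod_cast hn
  have hn1 : (1:ℝ) ≤ n := by exact_mod_cast hn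
  have := sum_nonempty_le n (fun a => Real.exp (-(3 * (a : ℝ) * Real.log n))) (1 / (n:ℝ)^2) ?_
  · refine this.trans (le_of_eq ?_)
    field_simp
  intro a ha _
  have h1 : (n.choose a : ℝ) ≤ (n:ℝ) ^ a := by exact_mod_cast Nat.choose_le_pow n a
  have h2 : Real.exp (-(3 * (a : ℝ) * Real.log n)) = 1 / (n:ℝ) ^ (3 * a) := by
    rw [Real.exp_neg, show 3 * (a:ℝ) * Real.log n = ((3 * a : ℕ) : ℝ) * Real.log n by push_cast; ring,
      Real.exp_nat_mul, Real.exp_log hn0, one_div]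
  rw [h2, mul_one_div, div_le_div_iff₀ (by positivity) (by positivity)]
  calc (n.choose a : ℝ) * (n:ℝ)^2 ≤ (n:ℝ)^a * (n:ℝ)^(2*a) := by
        gcongr
        omega
    _ = _ := by rw [← pow_add]; ring_nf

lemma sumT_le (n : ℕ) (hn : 1 ≤ n) :
    ∑ T ∈ (Finset.univ : Finset (Finset (Fin n))).filter (fun A => A.Nonempty),
      Real.exp (-(T.card : ℝ) - T.card * Real.log (n / T.card)) ≤ n := by
  have hn0 : (0:ℝ) < n := by exact_mod_cast hn
  have := sum_nonempty_le n (fun t => Real.exp (-(t : ℝ) - t * Real.log (n / t))) 1 ?_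
  · simpa using this
  intro t ht _
  have ht0 : (0:ℝ) < t := by exact_mod_cast ht
  have h1 := Nat.choose_le_pow_div (α := ℝ) t n
  have h2 := Real.pow_div_factorial_le_exp (t:ℝ) ht0.le t
  have h3 : Real.exp (-(t : ℝ) - t * Real.log (n / t)) = (Real.exp t)⁻¹ * ((t:ℝ) / n) ^ t := by
    rw [sub_eq_add_neg, Real.exp_add, Real.exp_neg, Real.exp_neg, Real.exp_nat_mul,
      Real.exp_log (by positivity), ← inv_pow, inv_div]
  rw [h3]
  calc (n.choose t : ℝ) * ((Real.exp t)⁻¹ * ((t:ℝ) / n) ^ t)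
      ≤ ((n:ℝ)^t / t.factorial) * ((Real.exp t)⁻¹ * ((t:ℝ) / n) ^ t) := by gcongr
    _ = (Real.exp t)⁻¹ * ((t:ℝ)^t / t.factorial) := by
        rw [div_pow]; field_simp
    _ ≤ (Real.exp t)⁻¹ * Real.exp t := by gcongr
    _ = 1 := by field_simp

/-- the numerical hypotheses valid for large `n` -/
structure LargeH (n k : ℕ) (p δ : ℝ) (lam : ℝ) : Prop where
  hn : 2 ≤ n
  hk : 2 ≤ k
  p0 : 0 ≤ p
  p1 : p ≤ 1
  hlam : lam = p * ((n - 1).choose (k - 1) : ℕ)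
  hdn : k * lam ≤ n
  d0 : 0 < δ
  d1 : δ ≤ 1 / 2
  dl : 4 ≤ δ * lam
  ddl : 40 * Real.log n ≤ δ ^ 2 * lam
  kl : 10 * Real.log n ≤ k

section
variable {n k : ℕ} {p δ lam : ℝ}

lemma LargeH.lam8 (H : LargeH n k p δ lam) : 8 ≤ lam := by
  have := H.d0; have := H.d1; have := H.dl
  nlinarith

lemma LargeH.log0 (H : LargeH n k p δ lam) : 0 ≤ Real.log n := Real.log_natCast_nonneg n

lemma LargeH.deg_up (H : LargeH n k p δ lam) (v : Fin n) :
    prE p (Finset.powersetCard k Finset.univ)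
      (fun E => (1 + δ) * lam < ((E ∩ FE k {v} Finset.univ).card : ℝ)) ≤ 1 / (n:ℝ)^2 := by
  have h8 := H.lam8
  have hd := H.d0
  have hd1 := H.d1
  have hlog : 0 ≤ Real.log (1 + δ) := Real.log_nonneg (by linarith)
  refine (prE_markov H.p0 H.p1 (Real.log (1+δ)) (Real.log (1+δ) * ((1+δ) * lam)) _ (FE k {v} Finset.univ)
    (FE_subset _ _) _ ?_).trans ?_
  · intro E hE
    exact mul_le_mul_of_nonneg_left hE.le hlog
  have hn0 : (0:ℝ) < n := by have := H.hn; exact_mod_cast (by omega : 0 < n)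
  have hcard : ((FE k {v} Finset.univ).card : ℝ) * p ≤ lam := by
    have := card_FE_le {v} (Finset.univ : Finset (Fin n)) (k := k)
    simp only [Finset.card_singleton, one_mul, Finset.card_univ, Fintype.card_fin] at this
    rw [H.hlam, mul_comm p]
    have hp := H.p0
    gcongr
  rw [Real.exp_log (by linarith)]
  have h1 := Real.le_log_one_add_of_nonneg hd.le
  have h2 : δ + δ^2/3 ≤ (1 + δ) * Real.log (1+δ) := by
    have : δ + δ^2/3 ≤ (1+δ) * (2 * δ / (δ + 2)) := by
      rw [mul_div_assoc', le_div_iff₀ (by linarith)]; nlinarith [mul_pos hd hd, mul_pos hd (mul_pos hd hd)]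
    refine this.trans ?_
    gcongr
  have h3 := H.ddl
  have h4 : ((FE k {v} Finset.univ).card : ℝ) * p * (1 + δ - 1) - Real.log (1+δ) * ((1+δ) * lam) ≤ -(((2:ℕ):ℝ) * Real.log n) := by
    have h5 : ((FE k {v} Finset.univ).card : ℝ) * p * (1 + δ - 1) ≤ lam * δ := by
      rw [show 1 + δ - 1 = δ by ring]; gcongr
    have h6 : (δ + δ^2/3) * lam ≤ ((1 + δ) * Real.log (1+δ)) * lam := by gcongr
    have := H.log0
    push_cast
    nlinarith
  refine (Real.exp_le_exp.2 h4).trans (le_of_eq ?_)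
  rw [Real.exp_neg, Real.exp_nat_mul, Real.exp_log hn0, one_div]

lemma LargeH.deg_low (H : LargeH n k p δ lam) (A : Finset (Fin n)) (hA : A.Nonempty)
    (hx : (A.card : ℝ) * (k * lam) ≤ n) :
    prE p (Finset.powersetCard k Finset.univ)
      (fun E => ((E ∩ FE k A Finset.univ).card : ℝ) < (1 - δ) * (A.card * lam)) ≤
      Real.exp (-(3 * (A.card : ℝ) * Real.log n)) := by
  have h8 := H.lam8
  have hd := H.d0
  have hd1 := H.d1
  have hk := H.hk
  have hn := H.hn
  have ha : 1 ≤ A.card := hA.card_pos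
  have han : A.card ≤ n := by simpa using Finset.card_le_univ A
  have ha' : (1:ℝ) ≤ A.card := by exact_mod_cast ha
  refine (prE_markov H.p0 H.p1 (-(δ/4)) (-(δ/4) * ((1-δ) * (A.card * lam))) _ (FE k A Finset.univ)
    (FE_subset _ _) _ ?_).trans ?_
  · intro E hE
    nlinarith
  apply Real.exp_le_exp.2
  have hn0 : (0:ℝ) < n := by exact_mod_cast (by omega : 0 < n)
  have hcount : (A.card : ℝ) * lam * (1 - δ/4) ≤ ((FE k A Finset.univ).card : ℝ) * p := by
    have h1 := le_card_FE (by omega : 1 ≤ k) A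
    obtain ⟨j, rfl⟩ : ∃ j, k = j + 2 := ⟨k - 2, by omega⟩
    have h2 := choose_drop (n - A.card) (A.card - 1) j
    rw [show n - A.card + (A.card - 1) = n - 1 by omega] at h2
    have h3 : (n - 1) * (n - 1 - 1).choose j = (n-1).choose (j+1) * (j+1) := by
      have := Nat.add_one_mul_choose_eq (n - 1 - 1) j
      rwa [show n - 1 - 1 + 1 = n - 1 by omega] at this
    have hlam := H.hlam
    rw [show j + 2 - 1 = j + 1 by omega] at h1 hlam
    set C := ((n-1).choose (j+1) : ℝ) with hC
    set C2 := ((n-1-1).choose j : ℝ) with hC2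
    set q := ((n - A.card).choose (j+1) : ℝ) with hq
    have h1' : (A.card : ℝ) * q ≤ ((FE (j+2) A Finset.univ).card : ℝ) := by rw [hq]; exact_mod_cast h1
    have h2' : C ≤ q + ((A.card:ℝ) - 1) * C2 := by
      have : ((A.card - 1 : ℕ) : ℝ) = (A.card : ℝ) - 1 := by push_cast [ha]; ring
      rw [hC, hq, hC2, ← this]; exact_mod_cast h2
    have h3' : ((n:ℝ) - 1) * C2 = C * (j+1) := by
      have : ((n - 1 : ℕ) : ℝ) = (n : ℝ) - 1 := by push_cast [(by omega : 1 ≤ n)]; ring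
      rw [hC, hC2, ← this]; exact_mod_cast h3
    have hn1 : (2:ℝ) ≤ n := by exact_mod_cast hn
    have hC20 : 0 ≤ C2 := by rw [hC2]; positivity
    have hC0 : 0 ≤ C := by rw [hC]; positivity
    have hanr : (A.card : ℝ) ≤ n := by exact_mod_cast han
    have h4 : ((A.card:ℝ) - 1) * C2 * n ≤ A.card * (C * (j+1)) := by
      rw [← h3']
      nlinarith
    have h5 : (A.card:ℝ) * ((j:ℝ)+1) ≤ n * (δ/4) := by
      have hx' := hx
      push_cast at hx'
      have hdl := H.dl
      have h7 : (A.card:ℝ) * ((j:ℝ)+1) * lam ≤ n * (δ/4) * lam := by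
        have h9 : (A.card:ℝ) * ((j:ℝ)+1) * lam ≤ n := by
          have : (0:ℝ) ≤ A.card * lam := by positivity
          nlinarith
        have h10 : (n:ℝ) * 1 ≤ n * (δ / 4 * lam) := by gcongr; linarith
        nlinarith
      exact le_of_mul_le_mul_right h7 (by linarith)
    have h6 : ((A.card:ℝ) - 1) * C2 ≤ δ/4 * C := by
      have : ((A.card:ℝ) - 1) * C2 * n ≤ (δ/4 * C) * n := by
        have := mul_le_mul_of_nonneg_right h5 hC0
        nlinarith
      exact le_of_mul_le_mul_right this hn0
    have hp := H.p0
    calc (A.card : ℝ) * lam * (1 - δ/4) = p * (A.card * (C * (1 - δ/4))) := by rw [hlam]; ring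
      _ ≤ p * (A.card * q) := by gcongr; linarith
      _ ≤ p * ((FE (j+2) A Finset.univ).card : ℝ) := by gcongr
      _ = _ := mul_comm _ _
  have hexp : Real.exp (-(δ/4)) - 1 ≤ -(δ/4) + (δ/4)^2 := by
    have h1 : Real.exp (-(δ/4)) ≤ 1 / (1 + δ/4) := by
      rw [Real.exp_neg, ← one_div]
      apply one_div_le_one_div_of_le (by linarith)
      linarith [Real.add_one_le_exp (δ/4)]
    have h2 : 1 / (1 + δ/4) ≤ 1 - δ/4 + (δ/4)^2 := by
      rw [div_le_iff₀ (by linarith)]; nlinarith [mul_pos hd (mul_pos hd hd)]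
    linarith
  have hneg : -(δ/4) + (δ/4)^2 ≤ 0 := by nlinarith
  set N := ((FE k A Finset.univ).card : ℝ) * p
  have hN : 0 ≤ N := by have := H.p0; positivity
  have hddl := H.ddl
  have hlog := H.log0
  have hal : 0 ≤ (A.card : ℝ) * lam := by positivity
  have s1 : N * (Real.exp (-(δ/4)) - 1) ≤ N * (-(δ/4) + (δ/4)^2) := by gcongr
  have s2 : N * (-(δ/4) + (δ/4)^2) ≤ (A.card : ℝ) * lam * (1 - δ/4) * (-(δ/4) + (δ/4)^2) :=
    mul_le_mul_of_nonpos_right hcount hneg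
  have s3 : (A.card : ℝ) * lam * (1 - δ/4) * (-(δ/4) + (δ/4)^2) + (δ/4) * ((1-δ) * (A.card * lam))
      ≤ -((A.card : ℝ) * lam) * (δ^2 / 8) := by
    have : (1 - δ/4) * (-(δ/4) + (δ/4)^2) + (δ/4) * (1-δ) ≤ -(δ^2/8) := by
      nlinarith [mul_pos hd (mul_pos hd hd)]
    nlinarith
  have s4 : (A.card : ℝ) * (40 * Real.log n) ≤ A.card * (δ^2 * lam) := by gcongr
  have s5 : 0 ≤ (A.card : ℝ) * Real.log n := by positivity
  nlinarith

set_option maxHeartbeats 1000000 in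
lemma LargeH.cover (H : LargeH n k p δ lam) (A T : Finset (Fin n)) (hA : A.Nonempty) (hT : T.Nonempty)
    (ε : ℝ) (he : 0 < ε) (he1 : ε ≤ 1/2)
    (hx : ((A.card : ℝ) * (k * lam) / n) ^ ε ≤ (2:ℝ) ^ (-6 : ℤ))
    (hTc : (T.card : ℝ) < (1 - ε) * (1 - δ) * (A.card * (k * lam))) :
    prE p (Finset.powersetCard k Finset.univ)
      (fun E => (1 - δ) * (A.card * lam) ≤ ((E ∩ FE k A T).card : ℝ)) ≤
      Real.exp (-(4 * (A.card : ℝ) * Real.log n)) *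
        Real.exp (-(T.card : ℝ) - T.card * Real.log (n / T.card)) := by
  have h8 := H.lam8
  have hd := H.d0
  have hd1 := H.d1
  have hk := H.hk
  have hn := H.hn
  have hn0 : (0:ℝ) < n := by exact_mod_cast (by omega : 0 < n)
  have ha' : (1:ℝ) ≤ A.card := by exact_mod_cast hA.card_pos
  have ht' : (1:ℝ) ≤ T.card := by exact_mod_cast hT.card_pos
  have htn' : T.card ≤ n := by simpa using Finset.card_le_univ T
  have htn : (T.card : ℝ) ≤ n := by exact_mod_cast htn'
  set a := (A.card : ℝ)
  set t := (T.card : ℝ) with ht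
  set l := Real.log (n / t) with hl
  have hl0 : 0 ≤ l := Real.log_nonneg (by rw [le_div_iff₀ (by linarith)]; linarith)
  have hk2 : (2:ℝ) ≤ k := by exact_mod_cast hk
  have hkc : ((k - 1 : ℕ) : ℝ) = (k:ℝ) - 1 := by push_cast [(by omega : 1 ≤ k)]; ring
  refine (prE_markov H.p0 H.p1 (((k - 1 : ℕ) : ℝ) * l) (((k - 1 : ℕ) : ℝ) * l * ((1-δ) * (a * lam))) _ (FE k A T)
    (FE_subset _ _) _ ?_).trans ?_
  · intro E hE
    exact mul_le_mul_of_nonneg_left hE (by positivity)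
  rw [← Real.exp_add]
  apply Real.exp_le_exp.2
  have hexp : Real.exp (((k - 1 : ℕ) : ℝ) * l) = (n / t) ^ (k - 1) := by
    rw [Real.exp_nat_mul, Real.exp_log (by positivity)]
  have hp := H.p0
  have hcount : ((FE k A T).card : ℝ) * p * (Real.exp (((k - 1 : ℕ) : ℝ) * l) - 1) ≤ a * lam := by
    have h1 : ((FE k A T).card : ℝ) ≤ a * ((T.card - 1).choose (k - 1) : ℕ) := by
      have := card_FE_le (k := k) A T
      simp only [a]
      exact_mod_cast this
    have h2 : (((T.card - 1).choose (k - 1) : ℕ) : ℝ) * (n / t) ^ (k-1) ≤ ((n - 1).choose (k - 1) : ℕ) := by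
      have h3 := choose_ratio (T.card - 1) (n - 1) (k - 1) (by omega)
      have e1 : ((n - 1 : ℕ) : ℝ) = (n : ℝ) - 1 := by push_cast [(by omega : 1 ≤ n)]; ring
      have e2 : ((T.card - 1 : ℕ) : ℝ) = t - 1 := by rw [ht]; push_cast [hT.card_pos]; ring
      have h3' : (((T.card - 1).choose (k - 1) : ℕ) : ℝ) * ((n:ℝ) - 1) ^ (k-1)
          ≤ ((n - 1).choose (k - 1) : ℕ) * (t - 1) ^ (k-1) := by
        rw [← e1, ← e2]; exact_mod_cast h3
      have hn1 : (2:ℝ) ≤ n := by exact_mod_cast hn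
      have hpos : 0 < ((n:ℝ) - 1) ^ (k-1) := by
        have : 0 < (n:ℝ) - 1 := by linarith
        positivity
      have h4 : (n / t) * (t - 1) ≤ (n:ℝ) - 1 := by
        rw [div_mul_eq_mul_div, div_le_iff₀ (by linarith)]; nlinarith
      have h5 : ((n / t) * (t - 1)) ^ (k-1) ≤ ((n:ℝ) - 1) ^ (k-1) := by
        have : 0 ≤ (n / t) * (t - 1) := mul_nonneg (by positivity) (by linarith)
        gcongr
      rw [mul_pow] at h5
      have hnt : 0 ≤ ((n:ℝ) / t) ^ (k-1) := by positivity
      refine le_of_mul_le_mul_right ?_ hpos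
      calc (((T.card - 1).choose (k - 1) : ℕ) : ℝ) * (n / t) ^ (k-1) * ((n:ℝ) - 1) ^ (k-1)
          = (n / t) ^ (k-1) * ((((T.card - 1).choose (k - 1) : ℕ) : ℝ) * ((n:ℝ) - 1) ^ (k-1)) := by ring
        _ ≤ (n / t) ^ (k-1) * (((n - 1).choose (k - 1) : ℕ) * (t - 1) ^ (k-1)) := by gcongr
        _ = ((n - 1).choose (k - 1) : ℕ) * ((n / t) ^ (k-1) * (t - 1) ^ (k-1)) := by ring
        _ ≤ _ := by gcongr
    rw [hexp]
    have hnt : 0 ≤ ((n:ℝ) / t) ^ (k-1) := by positivity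
    calc ((FE k A T).card : ℝ) * p * ((n / t) ^ (k - 1) - 1)
        ≤ ((FE k A T).card : ℝ) * p * ((n / t) ^ (k - 1)) := by gcongr; linarith
      _ ≤ (a * ((T.card - 1).choose (k - 1) : ℕ)) * p * ((n / t) ^ (k - 1)) := by gcongr
      _ = p * a * ((((T.card - 1).choose (k - 1) : ℕ) : ℝ) * (n / t) ^ (k-1)) := by ring
      _ ≤ p * a * ((n - 1).choose (k - 1) : ℕ) := by gcongr
      _ = a * lam := by rw [H.hlam]; ring
  set L := Real.log n with hL
  have hlL : l ≤ L := by
    apply Real.log_le_log (by positivity)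
    exact div_le_self hn0.le ht'
  have hx0 : 0 < a * (k * lam) / n := by positivity
  have hel : 4 ≤ ε * l := by
    have h1 := Real.log_le_log (by positivity) hx
    rw [Real.log_rpow hx0, Real.log_zpow] at h1
    have h2 : -l ≤ Real.log (a * (k * lam) / n) := by
      rw [hl, ← Real.log_inv, inv_div]
      apply Real.log_le_log (by positivity)
      gcongr
      refine hTc.le.trans ?_
      have : 0 ≤ a * (k * lam) := by positivity
      have : (1 - ε) * (1 - δ) ≤ 1 := by nlinarith
      nlinarith
    have h3 := Real.log_two_gt_d9
    push_cast at h1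
    nlinarith
  set m := (1 - δ) * (a * lam) with hm
  have hL0 : 0 ≤ L := H.log0
  have hal : 0 < a * lam := by positivity
  have hma : a ≤ m := by rw [hm]; nlinarith
  have h2m : a * lam ≤ 2 * m := by rw [hm]; nlinarith
  have hm0 : 0 < m := by linarith
  have htm : t ≤ (1 - ε) * (k * m) := by
    refine hTc.le.trans (le_of_eq ?_); rw [hm]; ring
  have hkl := H.kl
  rw [hkc] at hcount ⊢
  have s1 : t * l ≤ (1 - ε) * (k * m) * l := by gcongr
  have s2 : t ≤ k * m := by
    have : 0 ≤ ε * (k * m) := by positivity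
    linarith
  have s3 : 4 * (k * m) ≤ (ε * l) * (k * m) := by gcongr
  have s4 : m * l ≤ m * L := by gcongr
  have s5 : a * L ≤ m * L := by gcongr
  have s6 : m * (10 * L) ≤ m * k := by gcongr
  have s7 : m * 2 ≤ m * k := by gcongr
  linarith
lemma prE_or3 {α : Type*} {p : ℝ} (h0 : 0 ≤ p) (h1 : p ≤ 1) (U : Finset α)
    (Q R₁ R₂ R₃ : Finset α → Prop) (h : ∀ E ∈ U.powerset, Q E → R₁ E ∨ R₂ E ∨ R₃ E) :
    prE p U Q ≤ prE p U R₁ + prE p U R₂ + prE p U R₃ := by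
  have := prE_le_sum h0 h1 U Q (Finset.univ : Finset (Fin 3)) ![R₁, R₂, R₃] ?_
  · simpa [Fin.sum_univ_three] using this
  · intro E hE hQ
    rcases h E hE hQ with h | h | h
    · exact ⟨0, Finset.mem_univ _, h⟩
    · exact ⟨1, Finset.mem_univ _, h⟩
    · exact ⟨2, Finset.mem_univ _, h⟩

lemma prE_and_le {α : Type*} (p : ℝ) (U : Finset α) (c : Prop) (R : Finset α → Prop) (b : ℝ) (hb : 0 ≤ b)
    (h : c → prE p U R ≤ b) : prE p U (fun E => c ∧ R E) ≤ b := by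
  classical
  by_cases hc : c
  · simpa [hc] using h hc
  · have : prE p U (fun E => c ∧ R E) = 0 := by simp [prE, hc]
    rw [this]; exact hb

/-- `T` is too small to be the neighbourhood of `A`. -/
def SmallT (n k : ℕ) (δ lam : ℝ) (A T : Finset (Fin n)) : Prop :=
  ∃ ε : ℝ, 0 < ε ∧ ε ≤ 1/2 ∧ ((A.card : ℝ) * (k * lam) / n) ^ ε ≤ (2:ℝ) ^ (-6 : ℤ) ∧
    (T.card : ℝ) < (1 - ε) * (1 - δ) * (A.card * (k * lam))

lemma LargeH.bad (H : LargeH n k p δ lam) (Q : Finset (Finset (Fin n)) → Prop)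
    (hQ : ∀ E, Q E → (∃ v, (1 + δ) * lam < ((E ∩ FE k {v} Finset.univ).card : ℝ)) ∨
      (∃ A : Finset (Fin n), A.Nonempty ∧ (A.card : ℝ) * (k * lam) ≤ n ∧
        ((E ∩ FE k A Finset.univ).card : ℝ) < (1 - δ) * (A.card * lam)) ∨
      (∃ A T : Finset (Fin n), A.Nonempty ∧ T.Nonempty ∧ SmallT n k δ lam A T ∧
        (1 - δ) * (A.card * lam) ≤ ((E ∩ FE k A T).card : ℝ))) :
    prE p (Finset.powersetCard k Finset.univ) Q ≤ 3 / n := by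
  have hn1 : 1 ≤ n := by have := H.hn; omega
  have hn0 : (0:ℝ) < n := by exact_mod_cast hn1
  refine (prE_or3 H.p0 H.p1 _ Q _ _ _ (fun E _ => hQ E)).trans ?_
  have b1 := prE_le_sum H.p0 H.p1 (Finset.powersetCard k Finset.univ)
    (fun E => ∃ v, (1 + δ) * lam < ((E ∩ FE k {v} Finset.univ).card : ℝ)) (Finset.univ : Finset (Fin n))
    (fun v E => (1 + δ) * lam < ((E ∩ FE k {v} Finset.univ).card : ℝ))
    (fun E _ ⟨v, hv⟩ => ⟨v, Finset.mem_univ _, hv⟩)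
  have c1 : ∑ v : Fin n, prE p (Finset.powersetCard k Finset.univ)
      (fun E => (1 + δ) * lam < ((E ∩ FE k {v} Finset.univ).card : ℝ)) ≤ 1 / n := by
    refine (Finset.sum_le_sum fun v _ => H.deg_up v).trans (le_of_eq ?_)
    simp; field_simp
  have b2 := prE_le_sum H.p0 H.p1 (Finset.powersetCard k Finset.univ)
    (fun E => ∃ A : Finset (Fin n), A.Nonempty ∧ (A.card : ℝ) * (k * lam) ≤ n ∧
        ((E ∩ FE k A Finset.univ).card : ℝ) < (1 - δ) * (A.card * lam))
    ((Finset.univ : Finset (Finset (Fin n))).filter (fun A => A.Nonempty))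
    (fun A E => (A.card : ℝ) * (k * lam) ≤ n ∧ ((E ∩ FE k A Finset.univ).card : ℝ) < (1 - δ) * (A.card * lam))
    (fun E _ ⟨A, h1, h2⟩ => ⟨A, by simpa using h1, h2⟩)
  have c2 := (Finset.sum_le_sum fun A hA => prE_and_le p (Finset.powersetCard k Finset.univ)
    ((A.card : ℝ) * (k * lam) ≤ n) (fun E => ((E ∩ FE k A Finset.univ).card : ℝ) < (1 - δ) * (A.card * lam)) _
    (Real.exp_pos _).le (H.deg_low A (Finset.mem_filter.1 hA).2)).trans (sumA_le n hn1)
  have b3 := prE_le_sum H.p0 H.p1 (Finset.powersetCard k Finset.univ)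
    (fun E => ∃ A T : Finset (Fin n), A.Nonempty ∧ T.Nonempty ∧ SmallT n k δ lam A T ∧
        (1 - δ) * (A.card * lam) ≤ ((E ∩ FE k A T).card : ℝ))
    (((Finset.univ : Finset (Finset (Fin n))).filter (fun A => A.Nonempty)) ×ˢ
      ((Finset.univ : Finset (Finset (Fin n))).filter (fun A => A.Nonempty)))
    (fun AT E => SmallT n k δ lam AT.1 AT.2 ∧ (1 - δ) * (AT.1.card * lam) ≤ ((E ∩ FE k AT.1 AT.2).card : ℝ))
    (fun E _ ⟨A, T, h1, h2, h3⟩ => ⟨(A, T), by simp [h1, h2], h3⟩)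
  have c3 : ∑ AT ∈ (((Finset.univ : Finset (Finset (Fin n))).filter (fun A => A.Nonempty)) ×ˢ
      ((Finset.univ : Finset (Finset (Fin n))).filter (fun A => A.Nonempty))),
      prE p (Finset.powersetCard k Finset.univ)
      (fun E => SmallT n k δ lam AT.1 AT.2 ∧ (1 - δ) * (AT.1.card * lam) ≤ ((E ∩ FE k AT.1 AT.2).card : ℝ))
      ≤ 1 / n := by
    have d1 : ∀ AT ∈ (((Finset.univ : Finset (Finset (Fin n))).filter (fun A => A.Nonempty)) ×ˢ
      ((Finset.univ : Finset (Finset (Fin n))).filter (fun A => A.Nonempty))),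
      prE p (Finset.powersetCard k Finset.univ)
      (fun E => SmallT n k δ lam AT.1 AT.2 ∧ (1 - δ) * (AT.1.card * lam) ≤ ((E ∩ FE k AT.1 AT.2).card : ℝ))
      ≤ (1 / n * Real.exp (-(3 * (AT.1.card : ℝ) * Real.log n))) *
        Real.exp (-(AT.2.card : ℝ) - AT.2.card * Real.log (n / AT.2.card)) := by
      rintro ⟨A, T⟩ hAT
      simp only [Finset.mem_product, Finset.mem_filter, Finset.mem_univ, true_and] at hAT
      refine prE_and_le _ _ _ _ _ (by positivity) ?_
      rintro ⟨ε, h1, h2, h3, h4⟩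
      refine (H.cover A T hAT.1 hAT.2 ε h1 h2 h3 h4).trans ?_
      gcongr
      have : (1:ℝ) / n = Real.exp (-Real.log n) := by rw [Real.exp_neg, Real.exp_log hn0, one_div]
      rw [this, ← Real.exp_add]
      apply Real.exp_le_exp.2
      have ha : (1:ℝ) ≤ A.card := by exact_mod_cast hAT.1.card_pos
      have := H.log0
      nlinarith
    refine (Finset.sum_le_sum d1).trans ?_
    rw [Finset.sum_product]
    dsimp only
    rw [← Finset.sum_mul_sum, ← Finset.mul_sum]
    have e1 := sumA_le n hn1
    have e2 := sumT_le n hn1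
    calc _ ≤ (1 / (n:ℝ) * (1 / n)) * n := by gcongr
      _ = 1 / n := by field_simp
  have : (3:ℝ) / n = 1 / n + 1 / n + 1 / n := by ring
  rw [this]
  exact add_le_add (add_le_add (b1.trans c1) (b2.trans c2)) (b3.trans c3)

lemma LargeH.final (H : LargeH n k p δ lam) :
    1 - 3 / (n:ℝ) ≤ ghProb n k p (fun G =>
        ∀ A : Finset (Fin n), ∀ ε : ℝ, 0 < ε → ε ≤ 1 / 2 →
          ((A.card : ℝ) * (k * lam) / n) ^ ε ≤ (2 : ℝ) ^ (-6 : ℤ) →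
          (1 - ε) * (1 - δ) * (A.card * (k * lam)) ≤ ((G.vNhd ↑A 1).ncard : ℝ) ∧
          ((G.vNhd ↑A 1).ncard : ℝ) ≤ A.card * (k * ((1 + δ) * lam))) := by
  classical
  have hn1 : 1 ≤ n := by have := H.hn; omega
  have hn0 : (0:ℝ) < n := by exact_mod_cast hn1
  have h8 := H.lam8
  have hd := H.d0
  have hd1 := H.d1
  rw [ghProb_eq]
  refine sub_le_sub_left (H.bad _ ?_) _
  rintro E ⟨hE, hbad⟩
  by_contra hcon
  push Not at hcon
  obtain ⟨g1, g2, g3⟩ := hcon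
  apply hbad
  intro A ε he he1 hx
  refine ⟨?_, vNhd_upper (by have := H.hk; omega) _ _ (by nlinarith) g1 A⟩
  rcases A.eq_empty_or_nonempty with rfl | hA
  · simp
  by_contra hlt
  rw [not_le] at hlt
  have hak : 0 ≤ (A.card : ℝ) * (k * lam) := by positivity
  have hxn : (A.card : ℝ) * (k * lam) ≤ n := by
    by_contra hc
    rw [not_le] at hc
    have h1 : 1 ≤ (A.card : ℝ) * (k * lam) / n := by rw [le_div_iff₀ hn0]; linarith
    have h2 := Real.one_le_rpow h1 he.le
    norm_num at hx
    linarith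
  set G : KGraph n k := ⟨E, hE⟩ with hG
  set T : Finset (Fin n) := (G.vNhd (↑A) 1).toFinset with hT
  have hTc : (G.vNhd (↑A) 1).ncard = T.card := by rw [hT, Set.ncard_eq_toFinset_card']
  have hmT : ∀ v, v ∈ T ↔ v ∈ A ∨ ∃ e ∈ E, v ∈ e ∧ ∃ x ∈ A, x ∈ e := by
    intro v; rw [hT, Set.mem_toFinset, mem_vNhd_one]
  have hTne : T.Nonempty := by
    obtain ⟨v, hv⟩ := hA
    exact ⟨v, (hmT v).2 (Or.inl hv)⟩
  rw [hTc] at hlt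
  have k1 := g2 A hA hxn
  have k2 := g3 A T hA hTne ⟨ε, he, he1, hx, hlt⟩
  have k3 : E ∩ FE k A Finset.univ ⊆ E ∩ FE k A T := by
    intro e he
    simp only [Finset.mem_inter, mem_FE] at he ⊢
    obtain ⟨h1, _, h2, x, h3, h4⟩ := he
    refine ⟨h1, ?_, h2, x, h3, h4⟩
    intro w hw
    exact (hmT w).2 (Or.inr ⟨e, h1, hw, x, h3, h4⟩)
  have k4 : ((E ∩ FE k A Finset.univ).card : ℝ) ≤ ((E ∩ FE k A T).card : ℝ) := by
    exact_mod_cast Finset.card_le_card k3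
  linarith

lemma largeH_eventually (k : ℕ → ℕ) (p : ℕ → ℝ)
    (hk2 : ∀ n, 2 ≤ k n) (hp : ∀ n, 0 < p n)
    (hd : Filter.Tendsto
      (fun n => p n * (((n - 1).choose (k n - 1) : ℕ) : ℝ) / Real.log n ^ 3)
      Filter.atTop Filter.atTop)
    (hk : Filter.Tendsto (fun n => (k n : ℝ) / Real.log n) Filter.atTop Filter.atTop)
    (hdn : ∀ᶠ n in Filter.atTop,
      p n * k n * (((n - 1).choose (k n - 1) : ℕ) : ℝ) ≤ (n : ℝ)) :
    ∀ᶠ n : ℕ in Filter.atTop, LargeH n (k n) (p n) (Real.sqrt (Real.log (Real.log n)) / Real.log n)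
      (p n * (((n - 1).choose (k n - 1) : ℕ) : ℝ)) := by
  have hL : Filter.Tendsto (fun n : ℕ => Real.log n) Filter.atTop Filter.atTop :=
    Real.tendsto_log_atTop.comp tendsto_natCast_atTop_atTop
  filter_upwards [hd.eventually_ge_atTop 40, hk.eventually_ge_atTop 10, hdn,
    hL.eventually_ge_atTop (Real.exp 1), Filter.eventually_ge_atTop 4] with n h1 h2 h3 h4 h5
  have hL1 : 2 ≤ Real.log n := by
    have := Real.add_one_le_exp (1:ℝ); linarith
  set L := Real.log n
  set lam := p n * (((n - 1).choose (k n - 1) : ℕ) : ℝ) with hlam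
  have hLL : 1 ≤ Real.log L := by
    rw [Real.le_log_iff_exp_le (by linarith)]; exact h4
  have hLL2 : Real.log L ≤ L - 1 := Real.log_le_sub_one_of_pos (by linarith)
  have hs1 : 1 ≤ Real.sqrt (Real.log L) := Real.one_le_sqrt.2 hLL
  have hss : Real.sqrt (Real.log L) ^ 2 = Real.log L := Real.sq_sqrt (by linarith)
  rw [le_div_iff₀ (by positivity)] at h1 h2
  have hkd : (k n : ℝ) * lam ≤ n := by rw [hlam]; linarith
  have hkn := hk2 n
  have hk2r : (2:ℝ) ≤ k n := by exact_mod_cast hkn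
  have hL3 : 8 ≤ L ^ 3 := by
    have := pow_le_pow_left₀ (by norm_num) hL1 3; norm_num at this; exact this
  have hlam8 : 320 ≤ lam := by linarith
  have hp1 : p n ≤ 1 := by
    by_contra hc
    rw [not_le] at hc
    have hkn2 : (k n : ℝ) * 2 ≤ n := by nlinarith
    have hkn3 : k n * 2 ≤ n := by exact_mod_cast hkn2
    have := nat_le_choose (n - 1) (k n - 1) (by omega) (by omega)
    have hc2 : (n:ℝ) - 1 ≤ (((n - 1).choose (k n - 1) : ℕ) : ℝ) := by
      have e1 : ((n - 1 : ℕ) : ℝ) = (n : ℝ) - 1 := by push_cast [(by omega : 1 ≤ n)]; ring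
      rw [← e1]; exact_mod_cast this
    have hn4 : (4:ℝ) ≤ n := by exact_mod_cast h5
    have : (n:ℝ) - 1 ≤ lam := by rw [hlam]; nlinarith
    nlinarith
  refine ⟨by omega, hkn, (hp n).le, hp1, rfl, hkd, by positivity, ?_, ?_, ?_, h2⟩
  · rw [div_le_iff₀ (by linarith)]
    apply Real.sqrt_le_iff.2
    constructor
    · linarith
    · nlinarith [sq_nonneg (L - 2)]
  · rw [div_mul_eq_mul_div, le_div_iff₀ (by linarith)]
    nlinarith [sq_nonneg (L - 2), mul_pos (by linarith : 0 < L) (by linarith : 0 < L)]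
  · rw [div_pow, hss, div_mul_eq_mul_div, le_div_iff₀ (by positivity)]
    nlinarith
end

/-- whp first vertex-neighbourhoods of small sets in `G^k(n,p)` are concentrated. -/
theorem whp_Gknp_vertex_neighbourhood_concentration (k : ℕ → ℕ) (p : ℕ → ℝ)
    (hk2 : ∀ n, 2 ≤ k n) (hp : ∀ n, 0 < p n)
    (hd : Filter.Tendsto
      (fun n => p n * (((n - 1).choose (k n - 1) : ℕ) : ℝ) / Real.log n ^ 3)
      Filter.atTop Filter.atTop)
    (hk : Filter.Tendsto (fun n => (k n : ℝ) / Real.log n) Filter.atTop Filter.atTop)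
    (hdn : ∀ᶠ n in Filter.atTop,
      p n * k n * (((n - 1).choose (k n - 1) : ℕ) : ℝ) ≤ (n : ℝ)) :
    Filter.Tendsto
      (fun n => ghProb n (k n) (p n) (fun G =>
        ∀ A : Finset (Fin n), ∀ ε : ℝ, 0 < ε → ε ≤ 1 / 2 →
          ((A.card : ℝ) * (p n * k n * (((n - 1).choose (k n - 1) : ℕ) : ℝ)) / n) ^ ε
              ≤ (2 : ℝ) ^ (-6 : ℤ) →
          (1 - ε) * (1 - Real.sqrt (Real.log (Real.log n)) / Real.log n) * A.card *
              (p n * k n * (((n - 1).choose (k n - 1) : ℕ) : ℝ))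
            ≤ ((G.vNhd ↑A 1).ncard : ℝ) ∧
          ((G.vNhd ↑A 1).ncard : ℝ) ≤
            (1 + Real.sqrt (Real.log (Real.log n)) / Real.log n) * A.card *
              (p n * k n * (((n - 1).choose (k n - 1) : ℕ) : ℝ))))
      Filter.atTop (nhds 1) := by
  have hev := largeH_eventually k p hk2 hp hd hk hdn
  have hlim : Filter.Tendsto (fun n : ℕ => 1 - 3 / (n:ℝ)) Filter.atTop (nhds 1) := by
    have := (tendsto_const_div_atTop_nhds_zero_nat (3:ℝ)).const_sub 1
    simpa using this
  refine tendsto_of_tendsto_of_tendsto_of_le_of_le' hlim tendsto_const_nhds ?_ ?_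
  · filter_upwards [hev] with n H
    refine H.final.trans (le_of_eq ?_)
    congr 1
    funext G
    have e1 : (k n : ℝ) * (p n * (((n - 1).choose (k n - 1) : ℕ) : ℝ)) =
      p n * k n * (((n - 1).choose (k n - 1) : ℕ) : ℝ) := by ring
    have e2 : ∀ x : ℝ, (k n : ℝ) * (x * (p n * (((n - 1).choose (k n - 1) : ℕ) : ℝ))) =
      x * (p n * k n * (((n - 1).choose (k n - 1) : ℕ) : ℝ)) := by intro x; ring
    simp only [e1, e2]
    simp only [mul_assoc]
    simp only [mul_left_comm]
  · filter_upwards [hev] with n H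
    rw [ghProb_eq]
    have := prE_nonneg H.p0 H.p1 (Finset.powersetCard (k n) (Finset.univ : Finset (Fin n)))
      (fun E => ∃ h : ∀ e ∈ E, e.card = k n, ¬ (fun G : KGraph n (k n) =>
        ∀ A : Finset (Fin n), ∀ ε : ℝ, 0 < ε → ε ≤ 1 / 2 →
          ((A.card : ℝ) * (p n * k n * (((n - 1).choose (k n - 1) : ℕ) : ℝ)) / n) ^ ε
              ≤ (2 : ℝ) ^ (-6 : ℤ) →
          (1 - ε) * (1 - Real.sqrt (Real.log (Real.log n)) / Real.log n) * A.card *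
              (p n * k n * (((n - 1).choose (k n - 1) : ℕ) : ℝ))
            ≤ ((G.vNhd ↑A 1).ncard : ℝ) ∧
          ((G.vNhd ↑A 1).ncard : ℝ) ≤
            (1 + Real.sqrt (Real.log (Real.log n)) / Real.log n) * A.card *
              (p n * k n * (((n - 1).choose (k n - 1) : ℕ) : ℝ))) ⟨E, h⟩)
    linarith
end

section
/- Let k = k(n) ≥ 2 and p = p(n) > 0 be sequences such that d̂/k = ω(log³ n), k = ω(log n), and d̂ ≤ n, where d̂ = p·k·C(n−1,k−1). Then with high probability (probability tending to 1 as n → ∞) the random hypergraph G = G^k(n,p) satisfies: for every subset A ⊆ [n], 2^{-16}·min(|A|·d̂, n) ≤ |N_V^1(A)| ≤ 2^{12}·|A|·d̂. -/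
open scoped BigOperators

namespace Nbhd
open Finset

/-- the weight of an edge set -/
noncomputable def wt (n k : ℕ) (p : ℝ) (E : Finset (Finset (Fin n))) : ℝ :=
  p ^ E.card * (1 - p) ^ ((Finset.powersetCard k (Finset.univ : Finset (Fin n))).card - E.card)

lemma wt_nonneg {n k : ℕ} {p : ℝ} (h0 : 0 ≤ p) (h1 : p ≤ 1) (E : Finset (Finset (Fin n))) :
    0 ≤ wt n k p E := by
  unfold wt
  have : 0 ≤ 1 - p := by linarith
  positivity

lemma uni {n k : ℕ} {E : Finset (Finset (Fin n))}
    (hE : E ∈ (Finset.powersetCard k (Finset.univ : Finset (Fin n))).powerset) :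
    ∀ e ∈ E, e.card = k := by
  intro e he
  exact (mem_powersetCard.1 (mem_powerset.1 hE he)).2

lemma sum_mgf (n k : ℕ) (p t : ℝ) (F : Finset (Finset (Fin n)))
    (hF : F ⊆ Finset.powersetCard k (Finset.univ : Finset (Fin n))) :
    ∑ E ∈ (Finset.powersetCard k (Finset.univ : Finset (Fin n))).powerset,
      wt n k p E * t ^ (E ∩ F).card = (1 + p * (t - 1)) ^ F.card := by
  classical
  set Ω := Finset.powersetCard k (Finset.univ : Finset (Fin n)) with hΩ
  have h := Finset.prod_add (fun e => p * (if e ∈ F then t else 1)) (fun _ => 1 - p) Ω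
  have h2 : ∏ e ∈ Ω, (p * (if e ∈ F then t else 1) + (1 - p)) = (1 + p * (t - 1)) ^ F.card := by
    have : ∀ e ∈ Ω, (p * (if e ∈ F then t else 1) + (1 - p))
        = if e ∈ F then (1 + p * (t - 1)) else 1 := by
      intro e _; split_ifs <;> ring
    rw [Finset.prod_congr rfl this, Finset.prod_ite_mem, Finset.inter_eq_right.2 hF,
      Finset.prod_const]
  rw [← h2, h]
  apply Finset.sum_congr rfl
  intro E hE
  rw [Finset.prod_mul_distrib, Finset.prod_const, Finset.prod_const, Finset.prod_ite_mem,
    Finset.prod_const, Finset.card_sdiff_of_subset (mem_powerset.1 hE), wt]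
  ring

lemma sum_wt (n k : ℕ) (p : ℝ) :
    ∑ E ∈ (Finset.powersetCard k (Finset.univ : Finset (Fin n))).powerset, wt n k p E = 1 := by
  have := sum_mgf n k p 1 ∅ (by simp)
  simpa using this

open Classical in
lemma ghProb_eq (n k : ℕ) (p : ℝ) (Q : KGraph n k → Prop) :
    ghProb n k p Q = ∑ E ∈ (Finset.powersetCard k (Finset.univ : Finset (Fin n))).powerset,
      wt n k p E * (if ∃ h : ∀ e ∈ E, e.card = k, Q ⟨E, h⟩ then 1 else 0) := by
  unfold ghProb
  apply Finset.sum_congr rfl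
  intro E hE
  have h := uni hE
  rw [dif_pos h]
  by_cases hq : Q ⟨E, h⟩
  · rw [if_pos hq, if_pos ⟨h, hq⟩, mul_one, wt]
  · rw [if_neg hq, if_neg (fun ⟨_, h'⟩ => hq h'), mul_zero]

lemma ghProb_le_one {n k : ℕ} {p : ℝ} (h0 : 0 ≤ p) (h1 : p ≤ 1) (Q : KGraph n k → Prop) :
    ghProb n k p Q ≤ 1 := by
  classical
  rw [ghProb_eq]
  refine le_of_le_of_eq ?_ (sum_wt n k p)
  apply Finset.sum_le_sum
  intro E _
  have := wt_nonneg (k := k) h0 h1 E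
  split_ifs <;> linarith

lemma ghProb_three {n k : ℕ} {p : ℝ} (h0 : 0 ≤ p) (h1 : p ≤ 1) (Q1 Q2 Q3 Q : KGraph n k → Prop)
    (h : ∀ G, Q1 G → Q2 G → Q3 G → Q G) :
    ghProb n k p Q1 + ghProb n k p Q2 + ghProb n k p Q3 - 2 ≤ ghProb n k p Q := by
  classical
  have e2 : (2 : ℝ) = ∑ E ∈ (Finset.powersetCard k (Finset.univ : Finset (Fin n))).powerset,
      wt n k p E * 2 := by rw [← Finset.sum_mul, sum_wt]; norm_num
  rw [e2]
  simp only [ghProb_eq]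
  rw [← Finset.sum_add_distrib, ← Finset.sum_add_distrib, ← Finset.sum_sub_distrib]
  apply Finset.sum_le_sum
  intro E hE
  have hw := wt_nonneg (k := k) h0 h1 E
  have hu := uni hE
  rw [← mul_add, ← mul_add, ← mul_sub]
  apply mul_le_mul_of_nonneg_left _ hw
  have := h ⟨E, hu⟩
  simp only [exists_prop_of_true hu]
  split_ifs <;> first | (exfalso; tauto) | norm_num

lemma ghProb_ge {ι : Type*} {n k : ℕ} {p : ℝ} (h0 : 0 ≤ p) (h1 : p ≤ 1)
    (I : Finset ι) (F : ι → Finset (Finset (Fin n)))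
    (hF : ∀ i ∈ I, F i ⊆ Finset.powersetCard k (Finset.univ : Finset (Fin n)))
    (lam c : ι → ℝ) (Q : KGraph n k → Prop)
    (hQ : ∀ G : KGraph n k, (∀ i ∈ I, lam i * ((G.edges ∩ F i).card : ℝ) < c i) → Q G) :
    1 - ∑ i ∈ I, Real.exp (-c i + p * ((F i).card : ℝ) * (Real.exp (lam i) - 1)) ≤
      ghProb n k p Q := by
  classical
  have step : ∀ i ∈ I, ∑ E ∈ (Finset.powersetCard k (Finset.univ : Finset (Fin n))).powerset,
      wt n k p E * Real.exp (lam i * ((E ∩ F i).card : ℝ) - c i) ≤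
      Real.exp (-c i + p * ((F i).card : ℝ) * (Real.exp (lam i) - 1)) := by
    intro i hi
    have e1 : ∀ E ∈ (Finset.powersetCard k (Finset.univ : Finset (Fin n))).powerset,
        wt n k p E * Real.exp (lam i * ((E ∩ F i).card : ℝ) - c i) =
        (wt n k p E * (Real.exp (lam i)) ^ (E ∩ F i).card) * Real.exp (-c i) := by
      intro E _
      rw [← Real.exp_nat_mul, mul_assoc, ← Real.exp_add]
      congr 2; ring
    rw [Finset.sum_congr rfl e1, ← Finset.sum_mul, sum_mgf n k p _ _ (hF i hi), Real.exp_add,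
      mul_comm]
    apply mul_le_mul_of_nonneg_left _ (Real.exp_pos _).le
    have : p * ((F i).card : ℝ) * (Real.exp (lam i) - 1) =
      (F i).card * (p * (Real.exp (lam i) - 1)) := by ring
    rw [this, Real.exp_nat_mul]
    apply pow_le_pow_left₀
    · have := Real.exp_pos (lam i)
      nlinarith
    · have := Real.add_one_le_exp (p * (Real.exp (lam i) - 1))
      linarith
  have h3 := Finset.sum_le_sum step
  rw [Finset.sum_comm] at h3
  refine le_trans (sub_le_sub_left h3 1) ?_
  rw [ghProb_eq]
  refine le_trans (le_of_eq (congrArg (fun z => z - _) (sum_wt n k p).symm)) ?_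
  rw [← Finset.sum_sub_distrib]
  apply Finset.sum_le_sum
  intro E hE
  have hw := wt_nonneg (k := k) h0 h1 E
  have hu := uni hE
  rw [← Finset.mul_sum]
  have : wt n k p E - wt n k p E * ∑ i ∈ I, Real.exp (lam i * ((E ∩ F i).card : ℝ) - c i)
    = wt n k p E * (1 - ∑ i ∈ I, Real.exp (lam i * ((E ∩ F i).card : ℝ) - c i)) := by ring
  rw [this]
  apply mul_le_mul_of_nonneg_left _ hw
  have hs : 0 ≤ ∑ i ∈ I, Real.exp (lam i * ((E ∩ F i).card : ℝ) - c i) :=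
    Finset.sum_nonneg (fun i _ => (Real.exp_pos _).le)
  split_ifs with hq
  · linarith
  · have : ∃ i ∈ I, c i ≤ lam i * ((E ∩ F i).card : ℝ) := by
      by_contra hcon
      push Not at hcon
      exact hq ⟨hu, hQ ⟨E, hu⟩ hcon⟩
    obtain ⟨i, hi, hc⟩ := this
    have h5 := Finset.single_le_sum (f := fun i => Real.exp (lam i * ((E ∩ F i).card : ℝ) - c i))
      (fun i _ => (Real.exp_pos _).le) hi
    have h6 : 1 ≤ Real.exp (lam i * ((E ∩ F i).card : ℝ) - c i) := Real.one_le_exp (by linarith)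
    linarith

/-- Union bound over vertex subsets. -/
lemma sum_sets_le {n : ℕ} (hn : 1 ≤ n) (I : Finset (Finset (Fin n))) (f : Finset (Fin n) → ℝ)
    (hf : ∀ A ∈ I, f A ≤ 1 / ((n : ℝ) ^ 2 * (n.choose A.card : ℝ))) :
    ∑ A ∈ I, f A ≤ 2 / n := by
  classical
  have hn' : (1 : ℝ) ≤ n := by exact_mod_cast hn
  calc ∑ A ∈ I, f A ≤ ∑ A ∈ I, 1 / ((n : ℝ) ^ 2 * (n.choose A.card : ℝ)) := Finset.sum_le_sum hf
    _ ≤ ∑ A ∈ (Finset.univ : Finset (Fin n)).powerset, 1 / ((n : ℝ) ^ 2 * (n.choose A.card : ℝ)) := by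
        apply Finset.sum_le_sum_of_subset_of_nonneg
        · intro A _; simp
        · intros; positivity
    _ = ∑ m ∈ Finset.range (n + 1), (1 / (n : ℝ) ^ 2) := by
        rw [Finset.sum_powerset_apply_card (fun m => 1 / ((n : ℝ) ^ 2 * (n.choose m : ℝ)))]
        simp only [Finset.card_univ, Fintype.card_fin, nsmul_eq_mul]
        apply Finset.sum_congr rfl
        intro m hm
        have : (0 : ℝ) < n.choose m := by
          exact_mod_cast Nat.choose_pos (by simpa [Nat.lt_succ_iff] using hm)
        field_simp
    _ ≤ 2 / n := by
        rw [Finset.sum_const, Finset.card_range, nsmul_eq_mul, mul_one_div,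
          div_le_div_iff₀ (by positivity) (by positivity)]
        push_cast
        nlinarith

lemma mem_vNhd {n k : ℕ} (G : KGraph n k) (A : Finset (Fin n)) (v : Fin n) :
    v ∈ G.vNhd (↑A) 1 ↔ v ∈ A ∨ ∃ e ∈ G.edges, v ∈ e ∧ ∃ x ∈ A, x ∈ e := by
  have hd : ∀ x, G.dist x v ≤ 1 ↔ x = v ∨ ∃ e ∈ G.edges, v ∈ e ∧ x ∈ e := by
    intro x
    unfold KGraph.dist
    split_ifs with hx
    · simp [hx]
    · simp only [hx, false_or]
      constructor
      · intro h
        have hlt : sInf ((fun l : List (Finset (Fin n)) => (l.length : ℕ∞)) ''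
            {l | G.IsLoosePath x v l}) < 2 := lt_of_le_of_lt h (by norm_num)
        rw [sInf_lt_iff] at hlt
        obtain ⟨_, ⟨l, ⟨h1, h2, h3, h4, h5⟩, rfl⟩, hl⟩ := hlt
        have hl' : l.length < 2 := by
          simp only at hl
          exact_mod_cast hl
        match l, h1, hl' with
        | [e], _, _ => exact ⟨e, by simpa using h2, by simpa using h4, by simpa using h3⟩
      · rintro ⟨e, he, hv, hx'⟩
        apply sInf_le
        refine ⟨[e], ⟨by simp, by simpa using he, by simpa using hx', by simpa using hv, ?_⟩, by simp⟩
        exact List.isChain_singleton _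
  have hs : G.setDist (↑A) {v} ≤ 1 ↔ ∃ x ∈ A, G.dist x v ≤ 1 := by
    unfold KGraph.setDist
    simp only [Set.mem_singleton_iff, iInf_iInf_eq_left]
    constructor
    · intro h
      have hlt : (⨅ x ∈ (A : Set (Fin n)), G.dist x v) < 2 := lt_of_le_of_lt h (by norm_num)
      simp only [iInf_lt_iff] at hlt
      obtain ⟨x, hx, hl⟩ := hlt
      exact ⟨x, hx, Order.le_of_lt_add_one (by simpa [one_add_one_eq_two] using hl)⟩
    · rintro ⟨x, hx, hl⟩
      exact le_trans (iInf₂_le x hx) hl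
  show G.setDist (↑A) {v} ≤ ((1 : ℕ) : ℕ∞) ↔ _
  rw [Nat.cast_one, hs]
  simp only [hd]
  constructor
  · rintro ⟨x, hx, rfl | ⟨e, he, hv, hxe⟩⟩
    · exact Or.inl hx
    · exact Or.inr ⟨e, he, hv, x, hx, hxe⟩
  · rintro (h | ⟨e, he, hv, x, hx, hxe⟩)
    · exact ⟨v, h, Or.inl rfl⟩
    · exact ⟨x, hx, Or.inr ⟨e, he, hv, hxe⟩⟩

/-! counting -/
lemma card_star {n k : ℕ} (v : Fin n) :
    ((Finset.powersetCard k (Finset.univ : Finset (Fin n))).filter (fun e => v ∈ e)).card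
      ≤ (n - 1).choose (k - 1) := by
  classical
  have : (Finset.powersetCard (k - 1) ((Finset.univ : Finset (Fin n)).erase v)).card
      = (n - 1).choose (k - 1) := by
    rw [Finset.card_powersetCard, Finset.card_erase_of_mem (mem_univ _)]; simp
  rw [← this]
  apply Finset.card_le_card_of_injOn (fun e => e.erase v)
  · intro e he
    have he := mem_filter.1 (mem_coe.1 he)
    have he1 := mem_powersetCard.1 he.1
    refine mem_coe.2 (mem_powersetCard.2 ?_)
    exact ⟨Finset.erase_subset_erase _ (subset_univ _), by rw [card_erase_of_mem he.2, he1.2]⟩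
  · intro e he f hf hef
    have he := mem_filter.1 (mem_coe.1 he)
    have hf := mem_filter.1 (mem_coe.1 hf)
    simp only at hef
    rw [← insert_erase he.2, ← insert_erase hf.2, hef]

lemma card_touch {n k : ℕ} (A : Finset (Fin n)) :
    (((Finset.powersetCard k (Finset.univ : Finset (Fin n))).filter
      (fun e => ∃ x ∈ A, x ∈ e)).card : ℝ) = n.choose k - (n - A.card).choose k := by
  classical
  have h := Finset.card_filter_add_card_filter_not
    (s := Finset.powersetCard k (Finset.univ : Finset (Fin n))) (fun e => ∃ x ∈ A, x ∈ e)
  have h2 : (Finset.powersetCard k (Finset.univ : Finset (Fin n))).filter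
      (fun e => ¬ ∃ x ∈ A, x ∈ e) = Finset.powersetCard k Aᶜ := by
    ext e
    simp only [mem_filter, mem_powersetCard, subset_iff, mem_compl, mem_univ, implies_true, true_and]
    constructor
    · rintro ⟨h, h'⟩; exact ⟨fun x hx hA => h' ⟨x, hA, hx⟩, h⟩
    · rintro ⟨h', h⟩; exact ⟨h, fun ⟨x, hA, hx⟩ => h' hx hA⟩
  rw [h2, card_powersetCard, card_powersetCard, card_compl] at h
  simp only [card_univ, Fintype.card_fin] at h
  have h' : (((Finset.powersetCard k (Finset.univ : Finset (Fin n))).filter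
      (fun e => ∃ x ∈ A, x ∈ e)).card : ℝ) + (n - A.card).choose k = n.choose k := by
    exact_mod_cast h
  linarith

lemma choose_sub1 (N K a : ℕ) (ha : a ≤ N) :
    (N.choose (K + 1) : ℝ) - a * ((N - 1).choose K : ℝ) ≤ (N - a).choose (K + 1) := by
  induction a with
  | zero => simp
  | succ a ih =>
    have ih := ih (by omega)
    obtain ⟨m, hm⟩ : ∃ m, N - a = m + 1 := ⟨N - a - 1, by omega⟩
    have hm' : N - (a + 1) = m := by omega
    rw [hm, Nat.choose_succ_succ] at ih
    rw [hm']
    have : (m.choose K : ℝ) ≤ (N - 1).choose K := by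
      exact_mod_cast Nat.choose_le_choose K (by omega)
    push_cast at ih ⊢
    linarith

/-- Bonferroni-type bound -/
lemma choose_bonf (N K a : ℕ) (ha : a ≤ N) :
    (a : ℝ) * ((N - 1).choose (K + 1) - a * ((N - 2).choose K : ℝ)) ≤
      N.choose (K + 2) - (N - a).choose (K + 2) := by
  induction a with
  | zero => simp
  | succ a ih =>
    have ih := ih (by omega)
    obtain ⟨m, hm⟩ : ∃ m, N - a = m + 1 := ⟨N - a - 1, by omega⟩
    have hm' : N - (a + 1) = m := by omega
    rw [hm, Nat.choose_succ_succ] at ih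
    rw [hm']
    have h1 := choose_sub1 (N - 1) K a (by omega)
    rw [show N - 1 - a = m by omega, show N - 1 - 1 = N - 2 by omega] at h1
    have h2 : (0 : ℝ) ≤ (N - 2).choose K := by positivity
    have h3 : (0 : ℝ) ≤ a := by positivity
    push_cast at ih ⊢
    nlinarith [mul_nonneg h3 h2]

lemma choose_ratio (s n j : ℕ) (h : s ≤ n) :
    ((s - 1).choose j : ℝ) * (n : ℝ) ^ j ≤ (n - 1).choose j * (s : ℝ) ^ j := by
  rcases Nat.eq_zero_or_pos s with rfl | hs
  · rcases j with _ | j <;> simp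
  induction j with
  | zero => simp
  | succ j ih =>
    by_cases hj : s - 1 < j + 1
    · rw [Nat.choose_eq_zero_of_lt hj]; simp; positivity
    have h1 : ((s - 1).choose (j + 1) : ℝ) * (j + 1) = (s - 1).choose j * ((s : ℝ) - 1 - j) := by
      have := Nat.choose_succ_right_eq (s - 1) j
      have h' : (((s - 1 - j : ℕ)) : ℝ) = (s : ℝ) - 1 - j := by
        rw [Nat.cast_sub (by omega), Nat.cast_sub hs]; simp
      rw [← h']; exact_mod_cast this
    have h2 : ((n - 1).choose (j + 1) : ℝ) * (j + 1) = (n - 1).choose j * ((n : ℝ) - 1 - j) := by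
      have := Nat.choose_succ_right_eq (n - 1) j
      have h' : (((n - 1 - j : ℕ)) : ℝ) = (n : ℝ) - 1 - j := by
        rw [Nat.cast_sub (by omega), Nat.cast_sub (by omega)]; simp
      rw [← h']; exact_mod_cast this
    have hsn : (s : ℝ) ≤ n := by exact_mod_cast h
    have hj' : (j : ℝ) + 1 ≤ s - 1 := by
      have : j + 1 + 1 ≤ s := by omega
      have : ((j + 1 + 1 : ℕ) : ℝ) ≤ s := by exact_mod_cast this
      push_cast at this; linarith
    have h4 : ((s : ℝ) - 1 - j) * n ≤ ((n : ℝ) - 1 - j) * s := by nlinarith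
    have hpos : (0 : ℝ) < j + 1 := by positivity
    refine le_of_mul_le_mul_right ?_ hpos
    calc ((s - 1).choose (j + 1) : ℝ) * (n : ℝ) ^ (j + 1) * (j + 1)
        = (((s - 1).choose (j + 1) : ℝ) * (j + 1)) * (n ^ j * n) := by ring
      _ = ((s - 1).choose j * (n : ℝ) ^ j) * (((s : ℝ) - 1 - j) * n) := by rw [h1]; ring
      _ ≤ ((n - 1).choose j * (s : ℝ) ^ j) * (((n : ℝ) - 1 - j) * s) := by
          apply mul_le_mul ih h4
          · apply mul_nonneg <;> [linarith; positivity]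
          · positivity
      _ = (((n - 1).choose (j + 1) : ℝ) * (j + 1)) * (s ^ j * s) := by rw [h2]; ring
      _ = _ := by ring

/-- entropy bound on binomials -/
lemma choose_le_exp (n s : ℕ) (hs : 1 ≤ s) (hsn : s ≤ n) :
    (n.choose s : ℝ) ≤ Real.exp (s * (1 + Real.log (n / s))) := by
  have hs' : (0 : ℝ) < s := by exact_mod_cast hs
  have hn' : (0 : ℝ) < n := by exact_mod_cast (by omega : 0 < n)
  have h1 := Nat.choose_le_pow_div (α := ℝ) s n
  have h2 := Real.pow_div_factorial_le_exp (s : ℝ) hs'.le s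
  have hf : (0 : ℝ) < (s.factorial : ℝ) := by exact_mod_cast s.factorial_pos
  have h3 : Real.exp (s * (1 + Real.log (n / s))) = Real.exp s * ((n : ℝ) / s) ^ s := by
    rw [mul_add, mul_one, Real.exp_add, Real.exp_nat_mul, Real.exp_log (by positivity)]
  rw [h3]
  refine h1.trans ?_
  calc (n : ℝ) ^ s / s.factorial = ((s : ℝ) ^ s / s.factorial) * ((n : ℝ) / s) ^ s := by
        rw [div_pow]; field_simp
    _ ≤ _ := mul_le_mul_of_nonneg_right h2 (by positivity)

end Nbhd
namespace Nbhd
open Finset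

/-- all edges meeting `A` -/
def touch (n k : ℕ) (A : Finset (Fin n)) : Finset (Finset (Fin n)) :=
  (Finset.powersetCard k (Finset.univ : Finset (Fin n))).filter (fun e => ∃ x ∈ A, x ∈ e)

/-- all edges at `v` -/
def star (n k : ℕ) (v : Fin n) : Finset (Finset (Fin n)) :=
  (Finset.powersetCard k (Finset.univ : Finset (Fin n))).filter (fun e => v ∈ e)

lemma part1 {n k : ℕ} {p D : ℝ} (h0 : 0 ≤ p) (h1 : p ≤ 1) (hn : 1 ≤ n)
    (hD : D = p * ((n - 1).choose (k - 1) : ℕ)) (hDl : 100 * Real.log n ≤ D) :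
    1 - 1 / (n : ℝ) ≤ ghProb n k p
      (fun G => ∀ v, ((G.edges ∩ star n k v).card : ℝ) < 2 ^ 11 * D) := by
  have hn' : (1 : ℝ) ≤ n := by exact_mod_cast hn
  have hlog : 0 ≤ Real.log n := Real.log_nonneg hn'
  refine le_trans ?_ (ghProb_ge h0 h1 (Finset.univ : Finset (Fin n)) (star n k)
    (fun i _ => filter_subset _ _) (fun _ => 1) (fun _ => 2 ^ 11 * D) _ ?_)
  · apply sub_le_sub_left
    have : ∀ v ∈ (Finset.univ : Finset (Fin n)),
        Real.exp (-(2 ^ 11 * D) + p * ((star n k v).card : ℝ) * (Real.exp 1 - 1)) ≤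
          1 / (n : ℝ) ^ 2 := by
      intro v _
      have hc : ((star n k v).card : ℝ) ≤ ((n - 1).choose (k - 1) : ℕ) := by
        exact_mod_cast card_star v
      have hc2 : p * ((star n k v).card : ℝ) ≤ D := by
        rw [hD]; exact mul_le_mul_of_nonneg_left hc h0
      have he := Real.exp_one_lt_d9
      have he' := Real.exp_one_gt_d9
      have : 1 / (n : ℝ) ^ 2 = Real.exp (-(2 * Real.log n)) := by
        rw [Real.exp_neg, show (2 : ℝ) * Real.log n = ((2 : ℕ) : ℝ) * Real.log n by norm_num,
          Real.exp_nat_mul, Real.exp_log (by linarith), one_div]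
      rw [this]
      apply Real.exp_le_exp.2
      have : p * ((star n k v).card : ℝ) * (Real.exp 1 - 1) ≤ D * 2 := by
        apply mul_le_mul hc2 (by linarith) (by linarith) (by linarith)
      linarith
    refine (Finset.sum_le_sum this).trans ?_
    rw [Finset.sum_const, card_univ, Fintype.card_fin, nsmul_eq_mul]
    apply le_of_eq; field_simp
  · intro G h v
    simpa using h v (mem_univ _)

lemma part2 {n k : ℕ} {p D : ℝ} (h0 : 0 ≤ p) (h1 : p ≤ 1) (hn : 2 ≤ n) (hk : 2 ≤ k)
    (hD : D = p * ((n - 1).choose (k - 1) : ℕ)) (hDl : 100 * Real.log n ≤ D) (hD100 : 100 ≤ D) :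
    1 - 2 / (n : ℝ) ≤ ghProb n k p
      (fun G => ∀ A : Finset (Fin n), A.Nonempty → A.card * (k * D) ≤ n →
        A.card * D / 8 < ((G.edges ∩ touch n k A).card : ℝ)) := by
  classical
  have hn' : (2 : ℝ) ≤ n := by exact_mod_cast hn
  have hlog : 0 ≤ Real.log n := Real.log_nonneg (by linarith)
  refine le_trans ?_ (ghProb_ge h0 h1
    ((Finset.univ : Finset (Finset (Fin n))).filter
      (fun A => A.Nonempty ∧ (A.card : ℝ) * (k * D) ≤ n)) (touch n k)
    (fun i _ => filter_subset _ _) (fun _ => -1) (fun A => -(A.card * D / 8)) _ ?_)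
  · apply sub_le_sub_left
    apply sum_sets_le (by omega)
    intro A hA
    obtain ⟨-, hA, hAk⟩ := mem_filter.1 hA
    have ha1 : 1 ≤ A.card := hA.card_pos
    have ha1' : (1 : ℝ) ≤ A.card := by exact_mod_cast ha1
    have han : A.card ≤ n := by simpa using card_le_univ A
    set a := A.card with ha
    -- number of touching edges
    have hcard := card_touch (k := k) A
    rw [← ha] at hcard
    obtain ⟨K, rfl⟩ : ∃ K, k = K + 2 := ⟨k - 2, by omega⟩
    have hb := choose_bonf n K a han
    have hrel : ((n - 2).choose K : ℝ) * (n - 1) = (n - 1).choose (K + 1) * (K + 1) := by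
      have := Nat.add_one_mul_choose_eq (n - 2) K
      rw [show n - 2 + 1 = n - 1 by omega] at this
      have h' : ((n - 1 : ℕ) : ℝ) = (n : ℝ) - 1 := by rw [Nat.cast_sub (by omega)]; simp
      rw [← h', mul_comm]; exact_mod_cast this
    have hD' : D = p * ((n - 1).choose (K + 1) : ℝ) := by rw [hD]; norm_num
    have hC0 : (0 : ℝ) ≤ (n - 1).choose (K + 1) := by positivity
    have hC1 : (0 : ℝ) ≤ (n - 2).choose K := by positivity
    have hsmall : (a : ℝ) * (K + 1) ≤ (n - 1) / 2 := by
      push_cast at hAk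
      have h3 : (a : ℝ) * (K + 1) * 100 ≤ a * ((K + 2) * D) := by
        have : ((K : ℝ) + 1) * 100 ≤ (K + 2) * D := by
          have : (0 : ℝ) ≤ K := by positivity
          nlinarith
        nlinarith
      linarith
    have hhalf : (a : ℝ) * ((n - 2).choose K : ℝ) ≤ (n - 1).choose (K + 1) / 2 := by
      have hpos : (0 : ℝ) < n - 1 := by linarith
      refine le_of_mul_le_mul_right ?_ hpos
      calc (a : ℝ) * ((n - 2).choose K : ℝ) * (n - 1)
          = (n - 1).choose (K + 1) * (a * (K + 1)) := by rw [mul_assoc, hrel]; ring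
        _ ≤ (n - 1).choose (K + 1) * ((n - 1) / 2) := mul_le_mul_of_nonneg_left hsmall hC0
        _ = _ := by ring
    have hF : (a : ℝ) * D / 2 ≤ p * ((touch n (K + 2) A).card : ℝ) := by
      have h5 : (a : ℝ) * ((n - 1).choose (K + 1) / 2) ≤ ((touch n (K + 2) A).card : ℝ) := by
        unfold touch
        rw [hcard]
        refine le_trans ?_ hb
        apply mul_le_mul_of_nonneg_left _ (by linarith)
        linarith
      calc (a : ℝ) * D / 2 = p * ((a : ℝ) * ((n - 1).choose (K + 1) / 2)) := by rw [hD']; ring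
        _ ≤ _ := mul_le_mul_of_nonneg_left h5 h0
    have he : Real.exp (-1) ≤ 1 / 2 := by
      have := Real.exp_neg_one_lt_d9; linarith
    -- exponent
    have hch : (n.choose a : ℝ) ≤ (n : ℝ) ^ a := by exact_mod_cast Nat.choose_le_pow n a
    have hcp : (0 : ℝ) < n.choose a := by exact_mod_cast Nat.choose_pos han
    have hR : Real.exp (-((3 * a : ℕ) * Real.log n)) ≤ 1 / ((n : ℝ) ^ 2 * (n.choose a : ℝ)) := by
      rw [Real.exp_neg, Real.exp_nat_mul, Real.exp_log (by linarith), ← one_div]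
      apply one_div_le_one_div_of_le (by positivity)
      calc (n : ℝ) ^ 2 * (n.choose a : ℝ) ≤ (n : ℝ) ^ (2 * a) * (n : ℝ) ^ a := by
            apply mul_le_mul _ hch hcp.le (by positivity)
            apply pow_le_pow_right₀ (by linarith) (by omega)
        _ = _ := by rw [← pow_add]; congr 1; ring
    refine le_trans (Real.exp_le_exp.2 ?_) hR
    have h7 : p * ((touch n (K + 2) A).card : ℝ) * (Real.exp (-1) - 1) ≤
        (a : ℝ) * D / 2 * (-(1 / 2)) := by
      have h8 : 0 ≤ (a : ℝ) * D / 2 := by positivity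
      nlinarith
    have h9 : (a : ℝ) * (100 * Real.log n) ≤ a * D := mul_le_mul_of_nonneg_left hDl (by linarith)
    have h10 : 0 ≤ (a : ℝ) * Real.log n := by positivity
    push_cast
    linarith
  · intro G h A hA hAk
    have := h A (mem_filter.2 ⟨mem_univ _, hA, hAk⟩)
    linarith

lemma part3 {n k : ℕ} {p D : ℝ} (h0 : 0 ≤ p) (h1 : p ≤ 1) (hn : 2 ≤ n) (hk : 2 ≤ k)
    (hD : D = p * ((n - 1).choose (k - 1) : ℕ)) (hL : 1 ≤ Real.log n)
    (hkl : 100 * Real.log n ≤ k) (hDn : D ≤ n) :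
    1 - 2 / (n : ℝ) ≤ ghProb n k p
      (fun G => ∀ S : Finset (Fin n), k ≤ S.card → 2 ^ 16 * (S.card : ℝ) ≤ n →
        ((G.edges ∩ powersetCard k S).card : ℝ) < 12 * S.card / k) := by
  classical
  have hn' : (2 : ℝ) ≤ n := by exact_mod_cast hn
  have hk' : (2 : ℝ) ≤ k := by exact_mod_cast hk
  have hpos : ∀ S : Finset (Fin n), k ≤ S.card → 2 ^ 16 * (S.card : ℝ) ≤ n →
      11 ≤ Real.log ((n : ℝ) / S.card) := by
    intro S hS1 hS2
    have hs : (0 : ℝ) < S.card := by exact_mod_cast (by omega : 0 < S.card)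
    have : Real.log ((2 : ℝ) ^ 16) ≤ Real.log ((n : ℝ) / S.card) := by
      apply Real.log_le_log (by positivity)
      rw [le_div_iff₀ hs]; exact hS2
    rw [Real.log_pow] at this
    have h2 := Real.log_two_gt_d9
    push_cast at this
    linarith
  refine le_trans ?_ (ghProb_ge h0 h1
    ((Finset.univ : Finset (Finset (Fin n))).filter
      (fun S => k ≤ S.card ∧ 2 ^ 16 * (S.card : ℝ) ≤ n)) (fun S => powersetCard k S)
    (fun i _ => powersetCard_mono (subset_univ _))
    (fun S => ((k - 1 : ℕ) : ℝ) / 2 * Real.log ((n : ℝ) / S.card))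
    (fun S => ((k - 1 : ℕ) : ℝ) / 2 * Real.log ((n : ℝ) / S.card) * (12 * S.card / k)) _ ?_)
  · apply sub_le_sub_left
    apply sum_sets_le (by omega)
    intro S hS
    obtain ⟨-, hS1, hS2⟩ := mem_filter.1 hS
    have hl := hpos S hS1 hS2
    have hsn : S.card ≤ n := by simpa using card_le_univ S
    rw [card_powersetCard]
    set s := S.card with hs
    set l := Real.log ((n : ℝ) / s) with hldef
    have hs1 : 1 ≤ s := by omega
    have hs' : (0 : ℝ) < s := by exact_mod_cast hs1
    have hks : (k : ℝ) ≤ s := by exact_mod_cast hS1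
    have hk1 : ((k - 1 : ℕ) : ℝ) = k - 1 := by rw [Nat.cast_sub (by omega)]; simp
    -- expected number
    have hN : p * (s.choose k : ℝ) ≤ n ^ 2 * Real.exp (-((k - 1 : ℕ) * l)) := by
      have hr := choose_ratio s n (k - 1) hsn
      have hx : Real.exp (-((k - 1 : ℕ) * l)) = ((s : ℝ) / n) ^ (k - 1) := by
        rw [← mul_neg, Real.exp_nat_mul, Real.exp_neg, hldef, Real.exp_log (by positivity), inv_div]
      have h3 : (s.choose k : ℝ) ≤ s * ((s - 1).choose (k - 1) : ℝ) := by
        have := Nat.add_one_mul_choose_eq (s - 1) (k - 1)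
        rw [Nat.sub_add_cancel hs1, Nat.sub_add_cancel (by omega : 1 ≤ k)] at this
        have h4 : s.choose k ≤ s * (s - 1).choose (k - 1) := by
          rw [this]; exact Nat.le_mul_of_pos_right _ (by omega)
        exact_mod_cast h4
      have h5 : ((s - 1).choose (k - 1) : ℝ) ≤ (n - 1).choose (k - 1) * ((s : ℝ) / n) ^ (k - 1) := by
        rw [div_pow, ← mul_div_assoc, le_div_iff₀ (by positivity)]; exact hr
      have hx0 : 0 ≤ ((s : ℝ) / n) ^ (k - 1) := by positivity
      have hsn' : (s : ℝ) ≤ n := by exact_mod_cast hsn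
      rw [hx]
      calc p * (s.choose k : ℝ) ≤ p * (s * ((n - 1).choose (k - 1) * ((s : ℝ) / n) ^ (k - 1))) := by
            apply mul_le_mul_of_nonneg_left _ h0
            exact h3.trans (mul_le_mul_of_nonneg_left h5 hs'.le)
        _ = s * D * ((s : ℝ) / n) ^ (k - 1) := by rw [hD]; ring
        _ ≤ n ^ 2 * ((s : ℝ) / n) ^ (k - 1) := by
            apply mul_le_mul_of_nonneg_right _ hx0
            nlinarith
    have hN2 : p * (s.choose k : ℝ) * (Real.exp (((k - 1 : ℕ) : ℝ) / 2 * l) - 1) ≤ 1 := by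
      have hp0 : 0 ≤ p * (s.choose k : ℝ) := by positivity
      calc p * (s.choose k : ℝ) * (Real.exp (((k - 1 : ℕ) : ℝ) / 2 * l) - 1)
          ≤ p * (s.choose k : ℝ) * (Real.exp (((k - 1 : ℕ) : ℝ) / 2 * l)) := by
            apply mul_le_mul_of_nonneg_left _ hp0; linarith
        _ ≤ n ^ 2 * Real.exp (-((k - 1 : ℕ) * l)) * (Real.exp (((k - 1 : ℕ) : ℝ) / 2 * l)) :=
            mul_le_mul_of_nonneg_right hN (Real.exp_pos _).le
        _ = Real.exp (2 * Real.log n - ((k - 1 : ℕ) : ℝ) / 2 * l) := by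
            have : (n : ℝ) ^ 2 = Real.exp (2 * Real.log n) := by
              rw [show (2 : ℝ) * Real.log n = ((2 : ℕ) : ℝ) * Real.log n by norm_num,
                Real.exp_nat_mul, Real.exp_log (by linarith)]
            rw [this, mul_assoc, ← Real.exp_add, ← Real.exp_add]
            congr 1; ring
        _ ≤ 1 := by
            apply Real.exp_le_one_iff.2
            rw [hk1]
            nlinarith
    have hcl : 3 * (s * l) ≤ ((k - 1 : ℕ) : ℝ) / 2 * l * (12 * s / k) := by
      rw [hk1, ← mul_div_assoc, le_div_iff₀ (by linarith)]
      have : 0 ≤ s * l := by positivity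
      nlinarith
    have hch := choose_le_exp n s hs1 hsn
    rw [← hldef] at hch
    have hcp : (0 : ℝ) < n.choose s := by exact_mod_cast Nat.choose_pos hsn
    have hR : Real.exp (-(2 * Real.log n + s * (1 + l))) ≤ 1 / ((n : ℝ) ^ 2 * (n.choose s : ℝ)) := by
      rw [Real.exp_neg, Real.exp_add, show (2 : ℝ) * Real.log n = ((2 : ℕ) : ℝ) * Real.log n by norm_num,
                Real.exp_nat_mul, Real.exp_log (by linarith), ← one_div]
      apply one_div_le_one_div_of_le (by positivity)
      apply mul_le_mul_of_nonneg_left hch (by positivity)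
    refine le_trans (Real.exp_le_exp.2 ?_) hR
    have h12 : s * 11 ≤ s * l := mul_le_mul_of_nonneg_left hl hs'.le
    linarith
  · intro G h S hS1 hS2
    have := h S (mem_filter.2 ⟨mem_univ _, hS1, hS2⟩)
    have hl := hpos S hS1 hS2
    have hk1 : ((k - 1 : ℕ) : ℝ) = k - 1 := by rw [Nat.cast_sub (by omega)]; simp
    refine lt_of_mul_lt_mul_left this ?_
    apply mul_nonneg _ (by linarith)
    positivity

end Nbhd
namespace Nbhd
open Finset

lemma k_le_p_le {n k : ℕ} {p D : ℝ} (hk : 2 ≤ k) (hn : 2 ≤ n) (hp : 0 < p)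
    (hD : D = p * (((n - 1).choose (k - 1) : ℕ) : ℝ)) (hD1 : 100 ≤ D) (hDn : (k : ℝ) * D ≤ n) :
    k ≤ n ∧ p ≤ 1 := by
  have hk' : (2 : ℝ) ≤ k := by exact_mod_cast hk
  have hkn' : (k : ℝ) ≤ n := by nlinarith
  have hkn : k ≤ n := by exact_mod_cast hkn'
  refine ⟨hkn, ?_⟩
  have hC : n ≤ k * (n - 1).choose (k - 1) := by
    obtain ⟨K, rfl⟩ : ∃ K, k = K + 2 := ⟨k - 2, by omega⟩
    obtain ⟨N, rfl⟩ : ∃ N, n = N + 2 := ⟨n - 2, by omega⟩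
    have h := Nat.add_one_mul_choose_eq N K
    have hpos : 1 ≤ N.choose K := Nat.choose_pos (by omega)
    rw [show N + 2 - 1 = N + 1 by omega, show K + 2 - 1 = K + 1 by omega]
    set C := (N + 1).choose (K + 1)
    have h1 : N + 1 ≤ C * (K + 1) := by rw [← h]; exact Nat.le_mul_of_pos_right _ hpos
    have hC1 : 1 ≤ C := Nat.choose_pos (by omega)
    nlinarith
  have hC' : (n : ℝ) ≤ k * ((n - 1).choose (k - 1) : ℕ) := by exact_mod_cast hC
  have hn' : (2 : ℝ) ≤ n := by exact_mod_cast hn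
  by_contra hcon
  push Not at hcon
  have h6 : (k : ℝ) * D = p * (k * ((n - 1).choose (k - 1) : ℕ)) := by rw [hD]; ring
  nlinarith

lemma edges_sub {n k : ℕ} (G : KGraph n k) {e : Finset (Fin n)} (he : e ∈ G.edges) :
    e ∈ Finset.powersetCard k (Finset.univ : Finset (Fin n)) :=
  mem_powersetCard.2 ⟨subset_univ _, G.uniform e he⟩

lemma upper {n k : ℕ} {D : ℝ} (G : KGraph n k) (hk : 2 ≤ k) (hD : 1 ≤ D)
    (H : ∀ v, ((G.edges ∩ star n k v).card : ℝ) < 2 ^ 11 * D) (A : Finset (Fin n)) :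
    ((G.vNhd ↑A 1).ncard : ℝ) ≤ 2 ^ 12 * A.card * (k * D) := by
  classical
  set U : Finset (Fin n) :=
    A.biUnion (fun x => insert x ((G.edges ∩ star n k x).biUnion id)) with hU
  have hsub : G.vNhd ↑A 1 ⊆ (U : Set (Fin n)) := by
    intro v hv
    rw [mem_vNhd] at hv
    rw [mem_coe, hU, mem_biUnion]
    rcases hv with hv | ⟨e, he, hve, x, hx, hxe⟩
    · exact ⟨v, hv, mem_insert_self _ _⟩
    · refine ⟨x, hx, mem_insert_of_mem (mem_biUnion.2 ⟨e, ?_, hve⟩)⟩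
      exact mem_inter.2 ⟨he, mem_filter.2 ⟨edges_sub G he, hxe⟩⟩
  have h1 : (G.vNhd ↑A 1).ncard ≤ U.card := by
    rw [← Set.ncard_coe_finset U]
    exact Set.ncard_le_ncard hsub (Finset.finite_toSet _)
  have hk' : (2 : ℝ) ≤ k := by exact_mod_cast hk
  have h2 : (U.card : ℝ) ≤ ∑ x ∈ A, (2 ^ 12 * (k * D)) := by
    have h3 : (U.card : ℝ) ≤ ∑ x ∈ A,
        ((insert x ((G.edges ∩ star n k x).biUnion id)).card : ℝ) := by
      exact_mod_cast card_biUnion_le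
    refine h3.trans (Finset.sum_le_sum ?_)
    intro x _
    have h4 : ((G.edges ∩ star n k x).biUnion id).card ≤ (G.edges ∩ star n k x).card * k := by
      apply card_biUnion_le_card_mul
      intro e he
      exact (G.uniform e (mem_inter.1 he).1).le
    have h5 : ((insert x ((G.edges ∩ star n k x).biUnion id)).card : ℝ) ≤
        (G.edges ∩ star n k x).card * k + 1 := by
      exact_mod_cast (card_insert_le _ _).trans (Nat.succ_le_succ h4)
    have := H x
    nlinarith
  have h1' : ((G.vNhd ↑A 1).ncard : ℝ) ≤ U.card := by exact_mod_cast h1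
  rw [Finset.sum_const, nsmul_eq_mul] at h2
  linarith

lemma lower {n k : ℕ} {D : ℝ} (G : KGraph n k) (hk : 2 ≤ k) (hD : 1 ≤ D)
    (hDn : (k : ℝ) * D ≤ n)
    (H2 : ∀ A : Finset (Fin n), A.Nonempty → A.card * (k * D) ≤ n →
        A.card * D / 8 < ((G.edges ∩ touch n k A).card : ℝ))
    (H3 : ∀ S : Finset (Fin n), k ≤ S.card → 2 ^ 16 * (S.card : ℝ) ≤ n →
        ((G.edges ∩ powersetCard k S).card : ℝ) < 12 * S.card / k)
    (A : Finset (Fin n)) :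
    2 ^ (-16 : ℤ) * min ((A.card : ℝ) * (k * D)) n ≤ ((G.vNhd ↑A 1).ncard : ℝ) := by
  classical
  have hk' : (2 : ℝ) ≤ k := by exact_mod_cast hk
  rcases A.eq_empty_or_nonempty with rfl | hA
  · simp
  have hd0 : 0 < (k : ℝ) * D := by positivity
  have ha1 : 1 ≤ A.card := hA.card_pos
  -- choose a subset
  have hex : ∃ B ⊆ A, B.Nonempty ∧ (B.card : ℝ) * (k * D) ≤ n ∧
      min ((A.card : ℝ) * (k * D)) n ≤ 2 * (B.card * (k * D)) := by
    by_cases hc : (A.card : ℝ) * (k * D) ≤ n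
    · refine ⟨A, Subset.rfl, hA, hc, (min_le_left _ _).trans ?_⟩
      have : 0 ≤ (A.card : ℝ) * (k * D) := by positivity
      linarith
    · push Not at hc
      set q := ⌊(n : ℝ) / (k * D)⌋₊ with hq
      have hq1 : 1 ≤ q := Nat.le_floor (by rw [Nat.cast_one, le_div_iff₀ hd0]; linarith)
      have hq2 : (q : ℝ) ≤ n / (k * D) := Nat.floor_le (by positivity)
      have hq3 : (n : ℝ) / (k * D) < q + 1 := Nat.lt_floor_add_one _
      rw [le_div_iff₀ hd0] at hq2
      rw [div_lt_iff₀ hd0] at hq3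
      have hqA : q ≤ A.card := by
        have : (q : ℝ) < A.card := by
          refine lt_of_mul_lt_mul_right (lt_of_le_of_lt hq2 hc) hd0.le
        exact_mod_cast this.le
      obtain ⟨B, hBA, hB⟩ := exists_subset_card_eq hqA
      refine ⟨B, hBA, card_pos.1 (by omega), by rw [hB]; exact hq2, (min_le_right _ _).trans ?_⟩
      rw [hB]
      have : (1 : ℝ) ≤ q := by exact_mod_cast hq1
      nlinarith
  obtain ⟨B, hBA, hBne, hBn, hmin⟩ := hex
  have hb1 : (1 : ℝ) ≤ B.card := by exact_mod_cast hBne.card_pos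
  by_contra hcon
  push Not at hcon
  set S : Finset (Fin n) := univ.filter (fun v => v ∈ G.vNhd ↑B 1) with hS
  have hSA : (S : Set (Fin n)) ⊆ G.vNhd ↑A 1 := by
    intro v hv
    have hv := (mem_filter.1 (mem_coe.1 hv)).2
    rw [mem_vNhd] at hv ⊢
    rcases hv with hv | ⟨e, he, hve, x, hx, hxe⟩
    · exact Or.inl (hBA hv)
    · exact Or.inr ⟨e, he, hve, x, hBA hx, hxe⟩
  have hcardS : (S.card : ℝ) ≤ (G.vNhd ↑A 1).ncard := by
    rw [← Set.ncard_coe_finset S]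
    exact_mod_cast Set.ncard_le_ncard hSA (Set.toFinite _)
  have hpow : (2 : ℝ) ^ (-16 : ℤ) = 1 / 65536 := by norm_num
  rw [hpow] at hcon
  have hT := H2 B hBne hBn
  have hsub : G.edges ∩ touch n k B ⊆ G.edges ∩ powersetCard k S := by
    intro e he
    obtain ⟨he1, he2⟩ := mem_inter.1 he
    obtain ⟨-, x, hx, hxe⟩ := mem_filter.1 he2
    refine mem_inter.2 ⟨he1, mem_powersetCard.2 ⟨fun v hv => ?_, G.uniform e he1⟩⟩
    exact mem_filter.2 ⟨mem_univ _, (mem_vNhd G B v).2 (Or.inr ⟨e, he1, hv, x, hx, hxe⟩)⟩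
  have hcardT : ((G.edges ∩ touch n k B).card : ℝ) ≤ (G.edges ∩ powersetCard k S).card := by
    exact_mod_cast card_le_card hsub
  have hBD : 0 < (B.card : ℝ) * D := by positivity
  have hkS : k ≤ S.card := by
    have : 0 < ((G.edges ∩ powersetCard k S).card : ℝ) := by linarith
    have : 0 < (G.edges ∩ powersetCard k S).card := by exact_mod_cast this
    obtain ⟨e, he⟩ := card_pos.1 this
    obtain ⟨h1, h2⟩ := mem_powersetCard.1 (mem_inter.1 he).2
    rw [← h2]; exact card_le_card h1
  have hSn : 2 ^ 16 * (S.card : ℝ) ≤ n := by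
    have := min_le_right ((A.card : ℝ) * (k * D)) n
    norm_num
    linarith
  have h3 := H3 S hkS hSn
  have h4 : (B.card : ℝ) * D / 8 < 12 * S.card / k := by linarith
  rw [lt_div_iff₀ (by linarith)] at h4
  have h5 : 0 < (B.card : ℝ) * (k * D) := by positivity
  have h6 : (B.card : ℝ) * D / 8 * k = (B.card : ℝ) * (k * D) / 8 := by ring
  linarith

lemma three_ge {n k : ℕ} {p : ℝ} (h0 : 0 ≤ p) (h1 : p ≤ 1) {Q1 Q2 Q3 Q : KGraph n k → Prop}
    {x1 x2 x3 x : ℝ} (q1 : x1 ≤ ghProb n k p Q1) (q2 : x2 ≤ ghProb n k p Q2)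
    (q3 : x3 ≤ ghProb n k p Q3) (hx : x ≤ x1 + x2 + x3 - 2)
    (h : ∀ G, Q1 G → Q2 G → Q3 G → Q G) : x ≤ ghProb n k p Q := by
  have := ghProb_three h0 h1 Q1 Q2 Q3 Q h
  linarith

lemma main_bound {n k : ℕ} {p D : ℝ} (hn : 2 ≤ n) (hk : 2 ≤ k) (h0 : 0 ≤ p)
    (h1 : p ≤ 1) (hD : D = p * (((n - 1).choose (k - 1) : ℕ) : ℝ)) (hL : 1 ≤ Real.log n)
    (hkl : 100 * Real.log n ≤ k) (hDl : 100 * Real.log n ≤ D) (hDn : (k : ℝ) * D ≤ n) :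
    1 - 5 / (n : ℝ) ≤ ghProb n k p (fun G =>
        ∀ A : Finset (Fin n),
          (2 : ℝ) ^ (-16 : ℤ) *
              min ((A.card : ℝ) * (p * k * (((n - 1).choose (k - 1) : ℕ) : ℝ))) (n : ℝ)
            ≤ ((G.vNhd ↑A 1).ncard : ℝ) ∧
          ((G.vNhd ↑A 1).ncard : ℝ) ≤
            (2 : ℝ) ^ (12 : ℕ) * A.card *
              (p * k * (((n - 1).choose (k - 1) : ℕ) : ℝ))) := by
  have hk' : (2 : ℝ) ≤ k := by exact_mod_cast hk
  have e : p * k * (((n - 1).choose (k - 1) : ℕ) : ℝ) = k * D := by rw [hD]; ring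
  rw [e]
  have hD100 : 100 ≤ D := by linarith
  have hDn' : D ≤ n := by nlinarith
  have q1 := part1 (k := k) h0 h1 (by omega : 1 ≤ n) hD hDl
  have q2 := part2 h0 h1 hn hk hD hDl hD100
  have q3 := part3 h0 h1 hn hk hD hL hkl hDn'
  refine three_ge h0 h1 q1 q2 q3 ?_ ?_
  · have : (5 : ℝ) / n = 1 / n + 2 / n + 2 / n := by ring
    linarith
  · intro G g1 g2 g3 A
    exact ⟨lower G hk (by linarith) hDn g2 g3 A, upper G hk (by linarith) g1 A⟩

end Nbhd

/-- whp first vertex-neighbourhoods in `G^k(n,p)` have size of order `|A| d̂`. -/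
theorem whp_Gknp_vertex_neighbourhood_bounds (k : ℕ → ℕ) (p : ℕ → ℝ)
    (hk2 : ∀ n, 2 ≤ k n) (hp : ∀ n, 0 < p n)
    (hd : Filter.Tendsto
      (fun n => p n * (((n - 1).choose (k n - 1) : ℕ) : ℝ) / Real.log n ^ 3)
      Filter.atTop Filter.atTop)
    (hk : Filter.Tendsto (fun n => (k n : ℝ) / Real.log n) Filter.atTop Filter.atTop)
    (hdn : ∀ᶠ n in Filter.atTop,
      p n * k n * (((n - 1).choose (k n - 1) : ℕ) : ℝ) ≤ (n : ℝ)) :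
    Filter.Tendsto
      (fun n => ghProb n (k n) (p n) (fun G =>
        ∀ A : Finset (Fin n),
          (2 : ℝ) ^ (-16 : ℤ) *
              min ((A.card : ℝ) * (p n * k n * (((n - 1).choose (k n - 1) : ℕ) : ℝ))) (n : ℝ)
            ≤ ((G.vNhd ↑A 1).ncard : ℝ) ∧
          ((G.vNhd ↑A 1).ncard : ℝ) ≤
            (2 : ℝ) ^ (12 : ℕ) * A.card *
              (p n * k n * (((n - 1).choose (k n - 1) : ℕ) : ℝ))))
      Filter.atTop (nhds 1) := by
  have hlogT : Filter.Tendsto (fun n : ℕ => Real.log (n : ℝ)) Filter.atTop Filter.atTop :=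
    Real.tendsto_log_atTop.comp tendsto_natCast_atTop_atTop
  have hlow : Filter.Tendsto (fun n : ℕ => 1 - 5 / (n : ℝ)) Filter.atTop (nhds 1) := by
    have := (tendsto_const_div_atTop_nhds_zero_nat (5 : ℝ)).const_sub 1
    simpa using this
  have key : ∀ᶠ n : ℕ in Filter.atTop, 2 ≤ n ∧ 1 ≤ Real.log n ∧
      100 * Real.log n ≤ k n ∧ 100 * Real.log n ≤ p n * (((n - 1).choose (k n - 1) : ℕ) : ℝ) ∧
      (k n : ℝ) * (p n * (((n - 1).choose (k n - 1) : ℕ) : ℝ)) ≤ n := by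
    filter_upwards [Filter.eventually_ge_atTop 2, hlogT.eventually_ge_atTop 1,
      hd.eventually_ge_atTop 100, hk.eventually_ge_atTop 100, hdn] with n h2 hL h3 h4 h5
    have hL0 : 0 < Real.log n := by linarith
    rw [le_div_iff₀ hL0] at h4
    rw [le_div_iff₀ (by positivity)] at h3
    refine ⟨h2, hL, h4, le_trans ?_ h3, by linarith⟩
    have : Real.log n ≤ Real.log n ^ 3 := by
      calc Real.log n = Real.log n ^ 1 := by ring
        _ ≤ _ := pow_le_pow_right₀ hL (by norm_num)
    linarith
  apply tendsto_of_tendsto_of_tendsto_of_le_of_le' hlow tendsto_const_nhds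
  · filter_upwards [key] with n hh
    obtain ⟨h2, hL, h4, h3, h5⟩ := hh
    obtain ⟨-, hp1⟩ := Nbhd.k_le_p_le (hk2 n) h2 (hp n) rfl (by linarith) h5
    exact Nbhd.main_bound h2 (hk2 n) (hp n).le hp1 rfl hL h4 h3 h5
  · filter_upwards [key] with n hh
    obtain ⟨h2, hL, h4, h3, h5⟩ := hh
    obtain ⟨-, hp1⟩ := Nbhd.k_le_p_le (hk2 n) h2 (hp n) rfl (by linarith) h5
    exact Nbhd.ghProb_le_one (hp n).le hp1 _
end

section
/- Let d̂ = d̂(n) be a sequence with d̂ = ω(log⁴ n). Then for all sufficiently large n the following holds: for all a ≤ n and r ∈ ℕ such that a·d̂^r ≤ n/(2·log n), setting ε_0 = 0 and ε_i = 5/(log n − log(2·a·d̂^i)) for 1 ≤ i ≤ r, one has ∏_{j=0}^{r} (1 − ε_j) ≥ 2^{-4}. -/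
open scoped BigOperators

lemma aux_exp (x : ℝ) (h0 : 0 ≤ x) (h1 : x ≤ 1 / 2) : Real.exp (-(2 * x)) ≤ 1 - x := by
  rw [Real.exp_neg]
  have h2 : (1 - x)⁻¹ ≤ Real.exp (2 * x) := by
    have h3 := Real.add_one_le_exp (2 * x)
    refine le_trans ?_ h3
    rw [inv_le_iff_one_le_mul₀ (by linarith)]
    nlinarith
  exact inv_le_of_inv_le₀ (by linarith) h2

lemma aux_sum (s : ℕ) : ∑ m ∈ Finset.range (s + 1), (1 : ℝ) / (1 + 4 * m)
    ≤ 1 + (harmonic s : ℝ) / 4 := by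
  induction s with
  | zero => simp
  | succ s ih =>
    rw [Finset.sum_range_succ, harmonic_succ]
    have : (1 : ℝ) / (1 + 4 * ((s + 1 : ℕ) : ℝ)) ≤ ((s + 1 : ℕ) : ℝ)⁻¹ / 4 := by
      rw [inv_eq_one_div, div_div]
      apply one_div_le_one_div_of_le
      · positivity
      · linarith
    push_cast at *
    linarith

/-- the product `∏ (1 - ε_j)` is at least `2⁻⁴`. -/
theorem prod_one_sub_eps_ge (dhat : ℕ → ℝ) (hpos : ∀ n, 0 < dhat n)
    (homega : Filter.Tendsto (fun n => dhat n / Real.log n ^ 4) Filter.atTop Filter.atTop) :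
    ∀ᶠ n in Filter.atTop, ∀ a r : ℕ, 1 ≤ a → 1 ≤ r → a ≤ n →
      (a : ℝ) * dhat n ^ r ≤ (n : ℝ) / (2 * Real.log n) →
      (2 : ℝ)⁻¹ ^ 4 ≤ ∏ i ∈ Finset.range (r + 1),
        (1 - if i = 0 then 0 else 5 / (Real.log n - Real.log (2 * a * dhat n ^ i))) := by
  have hL : Filter.Tendsto (fun n : ℕ => Real.log (Real.log n)) Filter.atTop Filter.atTop :=
    Real.tendsto_log_atTop.comp (Real.tendsto_log_atTop.comp tendsto_natCast_atTop_atTop)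
  have hl : Filter.Tendsto (fun n : ℕ => Real.log n) Filter.atTop Filter.atTop :=
    Real.tendsto_log_atTop.comp tendsto_natCast_atTop_atTop
  filter_upwards [hL.eventually_ge_atTop 100, hl.eventually_ge_atTop 1,
    homega.eventually_ge_atTop 1, Filter.eventually_ge_atTop 1] with n hL hl hd hn
  intro a r ha hr han h
  have hd0 := hpos n
  have hn0 : (0 : ℝ) < n := by exact_mod_cast hn
  have ha0 : (0 : ℝ) < a := by exact_mod_cast ha
  have hl0 : 0 < Real.log n := by linarith
  have hD : 4 * Real.log (Real.log n) ≤ Real.log (dhat n) := by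
    rw [le_div_iff₀ (by positivity), one_mul] at hd
    have := Real.log_le_log (by positivity) hd
    rw [Real.log_pow] at this
    exact_mod_cast this
  have hlog := Real.log_le_log (by positivity) h
  rw [Real.log_mul ha0.ne' (by positivity), Real.log_pow, Real.log_div hn0.ne' (by positivity),
    Real.log_mul (by norm_num) hl0.ne'] at hlog
  have hlogi : ∀ i : ℕ, Real.log (2 * a * dhat n ^ i)
      = Real.log 2 + Real.log a + i * Real.log (dhat n) := by
    intro i
    rw [Real.log_mul (by positivity) (by positivity), Real.log_mul (by norm_num) ha0.ne',
      Real.log_pow]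
  have hloga : 0 ≤ Real.log a := Real.log_nonneg (by exact_mod_cast ha)
  have hlog2 : 0.6931471803 < Real.log 2 := Real.log_two_gt_d9
  generalize hLL : Real.log (Real.log n) = L at *
  generalize Real.log (dhat n) = D at *
  obtain ⟨s, rfl⟩ : ∃ s, r = s + 1 := ⟨r - 1, by omega⟩
  have hsL : Real.log s ≤ L := by
    rcases Nat.eq_zero_or_pos s with rfl | hs
    · simp; linarith
    · rw [← hLL]
      apply Real.log_le_log (by exact_mod_cast hs)
      push_cast at hlog
      have : (0 : ℝ) ≤ s := by positivity
      nlinarith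
  rw [Finset.prod_range_succ']
  simp only [Nat.add_eq_zero_iff, one_ne_zero, and_false, if_false, if_true, sub_zero, mul_one]
  have hterm : ∀ i ∈ Finset.range (s + 1),
      Real.exp (-(2 * (5 / L * (1 / (1 + 4 * ((s + 1 - 1 - i : ℕ) : ℝ)))))) ≤
      1 - 5 / (Real.log n - Real.log (2 * a * dhat n ^ (i + 1))) := by
    intro i hi
    have hi' : i ≤ s := by simpa [Nat.lt_succ_iff] using hi
    have hir : (i : ℝ) ≤ s := by exact_mod_cast hi'
    have hden : L * (1 + 4 * ((s + 1 - 1 - i : ℕ) : ℝ))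
        ≤ Real.log n - Real.log (2 * a * dhat n ^ (i + 1)) := by
      rw [hlogi, Nat.add_sub_cancel, Nat.cast_sub hi']
      push_cast at *
      nlinarith
    have hp : (0 : ℝ) ≤ ((s + 1 - 1 - i : ℕ) : ℝ) := by positivity
    have hden2 : 100 ≤ L * (1 + 4 * ((s + 1 - 1 - i : ℕ) : ℝ)) := by nlinarith
    have h1 : 5 / L * (1 / (1 + 4 * ((s + 1 - 1 - i : ℕ) : ℝ)))
        = 5 / (L * (1 + 4 * ((s + 1 - 1 - i : ℕ) : ℝ))) := by
      rw [div_mul_div_comm, mul_one]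
    rw [h1]
    have h2 : 5 / (Real.log n - Real.log (2 * a * dhat n ^ (i + 1)))
        ≤ 5 / (L * (1 + 4 * ((s + 1 - 1 - i : ℕ) : ℝ))) :=
      div_le_div_of_nonneg_left (by norm_num) (by linarith) hden
    have h3 : 5 / (L * (1 + 4 * ((s + 1 - 1 - i : ℕ) : ℝ))) ≤ 1 / 2 := by
      rw [div_le_div_iff₀ (by linarith) (by norm_num)]
      linarith
    have := aux_exp _ (by positivity) h3
    linarith
  refine le_trans ?_ (Finset.prod_le_prod (fun i _ => (Real.exp_pos _).le) hterm)
  rw [← Real.exp_sum, Finset.sum_neg_distrib, ← Finset.mul_sum, ← Finset.mul_sum,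
    Finset.sum_range_reflect (fun m : ℕ => (1 : ℝ) / (1 + 4 * (m : ℝ))) (s + 1)]
  have hS := aux_sum s
  have hH := harmonic_le_one_add_log s
  have hfin : 5 / L * ∑ m ∈ Finset.range (s + 1), (1 : ℝ) / (1 + 4 * m) ≤ 1.32 := by
    rw [div_mul_eq_mul_div, div_le_iff₀ (by linarith)]
    linarith
  rw [← Real.log_le_iff_le_exp (by positivity), Real.log_pow, Real.log_inv]
  push_cast
  linarith
end

section
/- Let G be a connected k-graph, let j ∈ ℕ, and suppose Y ⊆ V(G) is a set of vertices such that for every vertex v ∈ V(G) there exists an injection f : N_V^{j−1}(v) → Y with dist(x, f(x)) ≤ j for every x ∈ N_V^{j−1}(v). Then the cop number of G satisfies c(G) ≤ |Y|: the cops starting on the vertices of Y can catch the robber. -/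
open scoped BigOperators

namespace KGraph

/-- Auxiliary: sharing an edge or equal. -/
def AuxAdj {n k : ℕ} (G : KGraph n k) (x y : Fin n) : Prop :=
  x = y ∨ ∃ e ∈ G.edges, x ∈ e ∧ y ∈ e

/-- Auxiliary: reachable in at most `t` moves. -/
def AuxReach {n k : ℕ} (G : KGraph n k) : ℕ → Fin n → Fin n → Prop
  | 0, x, y => x = y
  | t + 1, x, y => ∃ z, G.AuxAdj x z ∧ AuxReach G t z y

variable {n k : ℕ} (G : KGraph n k)

lemma auxAdj_symm {x y : Fin n} (h : G.AuxAdj x y) : G.AuxAdj y x := by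
  rcases h with h | ⟨e, he, hx, hy⟩
  · exact Or.inl h.symm
  · exact Or.inr ⟨e, he, hy, hx⟩

lemma auxReach_refl (t : ℕ) (x : Fin n) : G.AuxReach t x x := by
  induction t with
  | zero => rfl
  | succ t ih => exact ⟨x, Or.inl rfl, ih⟩

lemma auxReach_mono {s t : ℕ} (h : s ≤ t) {x y : Fin n} (hr : G.AuxReach s x y) :
    G.AuxReach t x y := by
  induction t generalizing s x with
  | zero =>
    obtain rfl : s = 0 := by omega
    exact hr
  | succ t ih =>
    cases s with
    | zero =>
      obtain rfl : x = y := hr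
      exact auxReach_refl G _ _
    | succ s =>
      obtain ⟨z, hz, hr⟩ := hr
      exact ⟨z, hz, ih (by omega) hr⟩

lemma auxReach_snoc {t : ℕ} {x y z : Fin n} (h : G.AuxReach t x y) (ha : G.AuxAdj y z) :
    G.AuxReach (t + 1) x z := by
  induction t generalizing x with
  | zero =>
    obtain rfl : x = y := h
    exact ⟨z, ha, rfl⟩
  | succ t ih =>
    obtain ⟨w, hw, h⟩ := h
    exact ⟨w, hw, ih h⟩

lemma auxReach_symm {t : ℕ} {x y : Fin n} (h : G.AuxReach t x y) : G.AuxReach t y x := by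
  induction t generalizing x with
  | zero => exact Eq.symm h
  | succ t ih =>
    obtain ⟨w, hw, h⟩ := h
    exact auxReach_snoc G (ih h) (auxAdj_symm G hw)

lemma auxReach_of_path (l : List (Finset (Fin n))) (x y : Fin n) (h : G.IsLoosePath x y l) :
    G.AuxReach l.length x y := by
  induction l generalizing x with
  | nil => exact absurd rfl h.1
  | cons e l ih =>
    obtain ⟨-, hE, hx, hy, hc⟩ := h
    have hx' : x ∈ e := hx e (by simp)
    have he : e ∈ G.edges := hE e (by simp)
    cases l with
    | nil => exact ⟨y, Or.inr ⟨e, he, hx', hy e (by simp)⟩, rfl⟩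
    | cons e' l =>
      obtain ⟨⟨z, hz⟩, hc'⟩ := List.isChain_cons_cons.1 hc
      rw [Finset.mem_inter] at hz
      refine ⟨z, Or.inr ⟨e, he, hx', hz.1⟩, ih z ⟨by simp, ?_, ?_, ?_, hc'⟩⟩
      · intro a ha
        exact hE a (List.mem_cons_of_mem _ ha)
      · intro a ha
        simp only [List.head?_cons, Option.mem_def, Option.some.injEq] at ha
        subst ha
        exact hz.2
      · intro a ha
        apply hy a
        simpa using ha

lemma path_of_auxReach (t : ℕ) (x y : Fin n) (h : G.AuxReach t x y) :
    x = y ∨ ∃ l, G.IsLoosePath x y l ∧ l.length ≤ t := by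
  induction t generalizing x with
  | zero => exact Or.inl h
  | succ t ih =>
    obtain ⟨z, hz, h⟩ := h
    rcases hz with rfl | ⟨e, he, hx, hz⟩
    · rcases ih _ h with h | ⟨l, hl, hlt⟩
      · exact Or.inl h
      · exact Or.inr ⟨l, hl, by omega⟩
    · right
      rcases ih _ h with rfl | ⟨l, hl, hlt⟩
      · exact ⟨[e], ⟨by simp, by simpa using he, by simpa using hx, by simpa using hz,
          List.isChain_singleton _⟩, by simp⟩
      · obtain ⟨h0, hE, h1, h2, hc⟩ := hl
        cases l with
        | nil => exact absurd rfl h0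
        | cons e' l =>
          refine ⟨e :: e' :: l, ⟨by simp, ?_, by simpa using hx, ?_, ?_⟩, by simpa using hlt⟩
          · intro a ha
            rcases List.mem_cons.1 ha with rfl | ha
            · exact he
            · exact hE a ha
          · intro a ha
            apply h2 a
            simpa using ha
          · exact List.isChain_cons_cons.2
              ⟨⟨z, Finset.mem_inter.2 ⟨hz, h1 e' (by simp)⟩⟩, hc⟩

lemma dist_le_iff (t : ℕ) (x y : Fin n) : G.dist x y ≤ (t : ℕ∞) ↔ G.AuxReach t x y := by
  constructor
  · intro h
    by_cases hxy : x = y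
    · subst hxy
      exact auxReach_refl G _ _
    · rw [dist, if_neg hxy] at h
      have hne : ((fun l : List (Finset (Fin n)) => (l.length : ℕ∞)) ''
          {l | G.IsLoosePath x y l}).Nonempty := by
        by_contra hne
        rw [Set.not_nonempty_iff_eq_empty] at hne
        rw [hne, sInf_empty] at h
        simp at h
      obtain ⟨l, hl, hle⟩ := csInf_mem hne
      rw [← hle] at h
      change (l.length : ℕ∞) ≤ (t : ℕ∞) at h
      exact auxReach_mono G (by exact_mod_cast h) (auxReach_of_path G l x y hl)
  · intro h
    by_cases hxy : x = y
    · simp [dist, hxy]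
    · rcases path_of_auxReach G t x y h with h | ⟨l, hl, hlt⟩
      · exact absurd h hxy
      · rw [dist, if_neg hxy]
        have hlt' : (l.length : ℕ∞) ≤ (t : ℕ∞) := by exact_mod_cast hlt
        exact le_trans (sInf_le (Set.mem_image_of_mem _ hl)) hlt'

lemma dist_le_one_iff (x y : Fin n) : G.dist x y ≤ 1 ↔ G.AuxAdj x y := by
  have h := dist_le_iff G 1 x y
  rw [Nat.cast_one] at h
  rw [h]
  constructor
  · rintro ⟨z, hz, rfl⟩
    exact hz
  · intro hz
    exact ⟨y, hz, rfl⟩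

lemma copsWin_of_targets {m : ℕ} (g : Fin m → Fin n) (t : ℕ) (c : Fin m → Fin n) (r : Fin n)
    (hc : ∀ i, G.AuxReach (t + 1) (c i) (g i))
    (hr : ∀ r', G.AuxReach t r r' → ∃ i, g i = r') : CopsWin G c r := by
  induction t generalizing c r with
  | zero =>
    obtain ⟨i, hi⟩ := hr r rfl
    refine CopsWin.stepCaught c g r (fun i => ?_) i hi
    have h := (dist_le_iff G 1 _ _).2 (hc i)
    simpa using h
  | succ t ih =>
    choose c' hadj hreach using hc
    refine CopsWin.step c c' r (fun i => (dist_le_one_iff G _ _).2 (hadj i)) ?_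
    intro r' hr'
    refine ih c' r' hreach ?_
    intro r'' h
    exact hr r'' ⟨r', (dist_le_one_iff G _ _).1 hr', h⟩

end KGraph

/-- if every `(j-1)`-st vertex-neighbourhood admits an injection into `Y` moving
each vertex distance at most `j`, then cops starting on `Y` catch the robber, so `c(G) ≤ |Y|`. -/
theorem cop_number_le_of_vertex_injections (n k : ℕ) (G : KGraph n k) (hconn : G.Connected)
    (j : ℕ) (hj : 1 ≤ j) (Y : Finset (Fin n))
    (hY : ∀ v : Fin n, ∃ f : G.vNhd {v} (j - 1) → (Y : Set (Fin n)),
      Function.Injective f ∧ ∀ x, G.dist x.1 (f x).1 ≤ (j : ℕ∞)) :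
    (∃ c₀ : Fin Y.card → Fin n, (∀ i, c₀ i ∈ Y) ∧ ∀ r₀ : Fin n, KGraph.CopsWin G c₀ r₀) ∧
      G.copNumber ≤ Y.card := by
  have key : ∃ c₀ : Fin Y.card → Fin n, (∀ i, c₀ i ∈ Y) ∧ ∀ r₀ : Fin n, KGraph.CopsWin G c₀ r₀ := by
    refine ⟨fun i => (Y.equivFin.symm i).1, fun i => (Y.equivFin.symm i).2, fun v => ?_⟩
    obtain ⟨f, hf, hd⟩ := hY v
    have hex : ∀ i : Fin Y.card, ∃ w, G.AuxReach j (Y.equivFin.symm i).1 w ∧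
        ∀ x, (f x).1 = (Y.equivFin.symm i).1 → w = x.1 := by
      intro i
      by_cases h : ∃ x, (f x).1 = (Y.equivFin.symm i).1
      · obtain ⟨x, hx⟩ := h
        refine ⟨x.1, ?_, ?_⟩
        · rw [← hx]
          exact KGraph.auxReach_symm G ((KGraph.dist_le_iff G j _ _).1 (hd x))
        · intro x' hx'
          have : x = x' := hf (Subtype.ext (hx.trans hx'.symm))
          rw [this]
      · refine ⟨_, KGraph.auxReach_refl G j _, ?_⟩
        intro x hx
        exact absurd ⟨x, hx⟩ h
    choose g hg1 hg2 using hex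
    obtain ⟨t, rfl⟩ : ∃ t, j = t + 1 := ⟨j - 1, by omega⟩
    refine KGraph.copsWin_of_targets G g t _ v hg1 ?_
    intro r' hr'
    have hmem : r' ∈ G.vNhd {v} (t + 1 - 1) := by
      have := (KGraph.dist_le_iff G t _ _).2 hr'
      simpa [KGraph.vNhd, KGraph.setDist] using this
    refine ⟨Y.equivFin ⟨(f ⟨r', hmem⟩).1, (f ⟨r', hmem⟩).2⟩, ?_⟩
    apply hg2 _ ⟨r', hmem⟩
    simp
  refine ⟨key, ?_⟩
  obtain ⟨c₀, -, h⟩ := key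
  exact Nat.sInf_le ⟨c₀, h⟩
end
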